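/- arXiv:0804.4431 — 3 statements merged into one kernel-verified Lean document; each statement's English description precedes it below -/
import Mathlib

section
/- Fix positive integers r and s. For each positive integer t let X_t be the volume random variable on PP(r,s,t) equipped with the uniform probability distribution. Then the rescaled random variables Z_t = X_t / t converge in distribution, as t → ∞, to the rs-fold convolution of the uniform distribution on the interval [0,1] (i.e. to the sum of rs independent random variables each uniformly distributed on [0,1]). -/
/-!
The proof goes through MacMahon's formula: with `[k]_q = 1 + q + ⋯ + q ^ (k - 1)`,
`∑_{p ∈ PP r s t} q ^ vol p = ∏_{i < s, j < r} [s + j - i + t]_q / [s + j - i]_q` (`macmahon`).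
At `q = exp (i u / t)`, divided by its value at `q = 1`, this is the characteristic function of
`X_t / t` at `u`. As `t → ∞`, `q → 1`, so `[a]_q / a → 1` for fixed `a`, while
`[a + t]_q / (a + t) → (exp (i u) - 1) / (i u)`, the characteristic function of the uniform
distribution on `[0,1]`. Hence the characteristic functions converge to the `r s`-th power of the
latter (`tendsto_charFun_volLaw`), and Lévy's convergence theorem concludes.

MacMahon's formula is obtained from Gelfand–Tsetlin patterns. A plane partition in the
`(r,s,t)`-box is the same as a pattern with longest row `(0^s, t^r)`: all entries outside an
`r × s` rectangle are forced (`gtSum_topRow`). The generating function of patterns with a given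
longest row is a Vandermonde product up to an explicit factor (`gtSum_mul_gtDenom`), by induction on
the number of rows: summing a Vandermonde determinant over interlacing rows yields, by
multilinearity, the matrix of row differences of the next larger Vandermonde matrix. Comparing the
product for `t` with that for `t = 0` leaves the factors in MacMahon's formula.
-/

open Finset Filter MeasureTheory

/-- Plane partitions fitting inside an `(r,s,t)`-box. -/
def PP (r s t : ℕ) : Finset (Fin r → Fin s → Fin (t + 1)) :=
  Finset.univ.filter fun p =>
    ∀ i i' : Fin r, ∀ j j' : Fin s, i ≤ i' → j ≤ j' → (p i' j' : ℕ) ≤ (p i j : ℕ)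

/-- The volume of a plane partition. -/
def vol {r s t : ℕ} (p : Fin r → Fin s → Fin (t + 1)) : ℕ :=
  ∑ i, ∑ j, (p i j : ℕ)

/-- The uniform probability distribution on the interval `[0,1]`. -/
noncomputable def unif01 : Measure ℝ := volume.restrict (Set.Icc 0 1)

/-- The `n`-fold convolution of the uniform distribution on `[0,1]`: the law of the sum of
`n` independent uniform-`[0,1]` random variables. -/
noncomputable def unifConv (n : ℕ) : Measure ℝ :=
  Measure.map (fun x : Fin n → ℝ => ∑ i, x i) (Measure.pi fun _ => unif01)

open Polynomial

/-! ### Gelfand–Tsetlin sums and the Vandermonde determinant -/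

/-- The rows `m` of length `n` interlacing with `l`, in strict coordinates: `l i ≤ m i < l (i + 1)`.
Subtracting the staircase `i ↦ i` from all rows turns this into the usual weak interlacing. -/
def interlacing {n : ℕ} (l : Fin (n + 1) → ℕ) : Finset (Fin n → ℕ) :=
  Fintype.piFinset fun i : Fin n => Finset.Ico (l i.castSucc) (l i.succ)

/-- The generating function, by total sum of entries (row `l` included), of the strict
Gelfand–Tsetlin patterns with longest row `l`, defined by peeling off one row at a time. -/
def gtSum {R : Type*} [CommRing R] (q : R) : (n : ℕ) → (Fin n → ℕ) → R
  | 0, _ => 1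
  | n + 1, l => q ^ (∑ i, l i) * ∑ m ∈ interlacing l, gtSum q n m

/-- The factor `∏_{k < n} ∏_{1 ≤ j ≤ k} (q ^ j - 1)` by which `gtSum` differs from a Vandermonde
determinant. -/
def gtDenom {R : Type*} [CommRing R] (q : R) (n : ℕ) : R :=
  ∏ k ∈ range n, ∏ j : Fin k, (q ^ (j.val + 1) - 1)

/-- Subtracting from each row of a Vandermonde matrix the preceding one leaves `(1, 0, …, 0)` as
first column, so the determinant is that of the matrix of differences. -/
lemma det_vandermonde_eq_det_sub {R : Type*} [CommRing R] {n : ℕ} (y : Fin (n + 1) → R) :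
    (Matrix.vandermonde y).det =
      (Matrix.of fun i j : Fin n => y i.succ ^ (j.val + 1) - y i.castSucc ^ (j.val + 1)).det := by
  let B : Matrix (Fin (n + 1)) (Fin (n + 1)) R := Matrix.of fun i j =>
    Fin.cases (motive := fun _ => R) (y 0 ^ j.val)
      (fun i' : Fin n => y i'.succ ^ j.val - y i'.castSucc ^ j.val) i
  have h1 : (Matrix.vandermonde y).det = B.det := by
    apply Matrix.det_eq_of_forall_row_eq_smul_add_pred (fun _ => 1)
    · intro j; simp [B, Matrix.vandermonde]
    · intro i j; simp [B, Matrix.vandermonde]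
  rw [h1, Matrix.det_succ_column_zero, Fin.sum_univ_succ]
  have : ∀ i : Fin n, B i.succ 0 = 0 := by intro i; simp [B]
  simp only [this]
  simp [B]
  congr 1

lemma pow_sub_one_mul_sum_Ico {R : Type*} [CommRing R] (q : R) {a b : ℕ} (h : a ≤ b) (j : ℕ) :
    (q ^ j - 1) * ∑ m ∈ Finset.Ico a b, q ^ (m * j) = (q ^ b) ^ j - (q ^ a) ^ j := by
  have := geom_sum_Ico_mul (q ^ j) h
  rw [mul_comm]
  simp only [← pow_mul] at *
  convert this using 3
  · simp [mul_comm]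
  · ring
  · ring

/-- The Weyl-type evaluation of the Gelfand–Tsetlin sum. By multilinearity of the determinant in
its rows, summing Vandermonde determinants over interlacing rows gives the determinant of geometric
sums over intervals, i.e. of differences of consecutive rows of the next Vandermonde matrix. -/
lemma gtSum_mul_gtDenom {R : Type*} [CommRing R] (q : R) (n : ℕ) (l : Fin n → ℕ)
    (hl : Monotone l) :
    gtSum q n l * gtDenom q n =
      q ^ (∑ i, l i) * (Matrix.vandermonde fun i => q ^ l i).det := by
  induction n with
  | zero => simp [gtSum, gtDenom]
  | succ n ih =>
    have hD : gtDenom q (n + 1) = gtDenom q n * ∏ j : Fin n, (q ^ (j.val + 1) - 1) := by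
      simp [gtDenom, prod_range_succ]
    rw [gtSum, hD, mul_assoc]
    congr 1
    rw [← mul_assoc, sum_mul, det_vandermonde_eq_det_sub]
    have h1 : ∀ m ∈ interlacing l, gtSum q n m * gtDenom q n =
        (Matrix.of fun i j : Fin n => q ^ (m i * (j.val + 1))).det := by
      intro m hm
      have hm' : ∀ i, l i.castSucc ≤ m i ∧ m i < l i.succ := by
        simpa [interlacing, Fintype.mem_piFinset] using hm
      rw [ih m, ← Finset.prod_pow_eq_pow_sum, ← Matrix.det_mul_column]
      · congr 1; ext i j; simp [Matrix.vandermonde]; ring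
      · intro i j hij
        rcases hij.eq_or_lt with rfl | hij
        · rfl
        · have hs : i.succ ≤ j.castSucc := Nat.succ_le_of_lt hij
          exact ((hm' i).2.trans_le ((hl hs).trans (hm' j).1)).le
    rw [sum_congr rfl h1]
    have h2 := (Matrix.detRowAlternating (R := R) (n := Fin n)).toMultilinearMap.map_sum_finset
      (g := fun i (m : ℕ) => fun j : Fin n => q ^ (m * (j.val + 1)))
      (A := fun i : Fin n => Finset.Ico (l i.castSucc) (l i.succ))
    rw [show (∑ m ∈ interlacing l, (Matrix.of fun i j : Fin n => q ^ (m i * (j.val + 1))).det) = _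
      from h2.symm, mul_comm]
    erw [← Matrix.det_mul_row]
    congr 1; ext i j
    simp only [Matrix.of_apply, Finset.sum_apply]
    exact pow_sub_one_mul_sum_Ico q (hl (Fin.castSucc_le_succ i)) _

/-! ### Gelfand–Tsetlin patterns as triangular arrays -/

/-- `b` is a strict Gelfand–Tsetlin pattern with longest row `l`. The `i`-th entry of the row of
length `k` is stored as `b d i` with `d = k - 1 - i`, so that rows are antidiagonals; entries
outside the triangle `d + i < n` are required to vanish, to make the encoding unique. -/
def IsGT (n : ℕ) (l : Fin n → ℕ) (b : ℕ → ℕ → ℕ) : Prop :=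
  (∀ d i, n ≤ d + i → b d i = 0) ∧ (∀ d, ∀ i : Fin n, d + i + 1 = n → b d i = l i) ∧
    ∀ d i, d + i + 2 ≤ n → b (d + 1) i ≤ b d i ∧ b d i < b d (i + 1)

/-- The sum of all entries of a triangular array. -/
def gtWeight (n : ℕ) (b : ℕ → ℕ → ℕ) : ℕ :=
  ∑ k ∈ range n, ∑ c ∈ antidiagonal k, b c.1 c.2

/-- Puts the row `l` of length `n + 1` on the antidiagonal `d + i = n` of an array. -/
def addRow (n : ℕ) (l : Fin (n + 1) → ℕ) (b : ℕ → ℕ → ℕ) (d i : ℕ) : ℕ :=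
  if h : d + i = n then l ⟨i, by omega⟩ else b d i

lemma IsGT.addRow {n : ℕ} {l : Fin (n + 1) → ℕ} {m : Fin n → ℕ} {b : ℕ → ℕ → ℕ}
    (hm : m ∈ interlacing l) (hb : IsGT n m b) : IsGT (n + 1) l (addRow n l b) := by
  have hm' : ∀ i, l i.castSucc ≤ m i ∧ m i < l i.succ := by
    simpa [interlacing, Fintype.mem_piFinset] using hm
  obtain ⟨h0, h1, h2⟩ := hb
  refine ⟨fun d i h => ?_, fun d i h => ?_, fun d i h => ?_⟩
  · rw [_root_.addRow, dif_neg (by omega)]; exact h0 _ _ (by omega)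
  · rw [_root_.addRow, dif_pos (by omega)]
  · rcases Nat.lt_or_ge (d + i + 1) n with h' | h'
    · simp only [_root_.addRow]
      rw [dif_neg (by omega), dif_neg (by omega), dif_neg (by omega)]
      exact h2 d i (by omega)
    · simp only [_root_.addRow]
      rw [dif_pos (by omega), dif_neg (by omega), dif_pos (by omega)]
      have := hm' ⟨i, by omega⟩
      rw [← h1 d ⟨i, by omega⟩ (by simp; omega)] at this
      exact this

/-- Every pattern arises by `addRow` from the pattern with its longest row erased. -/
lemma IsGT.exists_addRow {n : ℕ} {l : Fin (n + 1) → ℕ} {b : ℕ → ℕ → ℕ}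
    (hb : IsGT (n + 1) l b) :
    ∃ m ∈ interlacing l, ∃ b', IsGT n m b' ∧ _root_.addRow n l b' = b := by
  obtain ⟨h0, h1, h2⟩ := hb
  refine ⟨fun i => b (n - 1 - i) i, ?_, fun d i => if d + i = n then 0 else b d i, ⟨?_, ?_, ?_⟩, ?_⟩
  · simp only [interlacing, Fintype.mem_piFinset, Finset.mem_Ico]
    intro i
    have hi := i.2
    have := h2 (n - 1 - i) i (by omega)
    rw [← h1 (n - 1 - i + 1) i.castSucc (by simp; omega),
      ← h1 (n - 1 - i) i.succ (by simp; omega)]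
    exact this
  · intro d i h
    by_cases h' : d + i = n
    · simp [h']
    · simp only [h', if_false]; exact h0 _ _ (by omega)
  · intro d i h
    beta_reduce
    rw [if_neg (by omega)]
    congr 1; omega
  · intro d i h
    beta_reduce
    rw [if_neg (by omega), if_neg (by omega), if_neg (by omega)]
    exact h2 d i (by omega)
  · ext d i
    by_cases h' : d + i = n
    · simp only [_root_.addRow, h', dif_pos]
      exact (h1 d ⟨i, by omega⟩ (by simp; omega)).symm
    · simp [_root_.addRow, h']

lemma gtWeight_addRow (n : ℕ) (l : Fin (n + 1) → ℕ) (b : ℕ → ℕ → ℕ) :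
    gtWeight (n + 1) (addRow n l b) = (∑ i, l i) + gtWeight n b := by
  rw [gtWeight, sum_range_succ, add_comm]
  congr 1
  · rw [← Finset.Nat.sum_antidiagonal_swap, Finset.Nat.sum_antidiagonal_eq_sum_range_succ_mk,
      ← Fin.sum_univ_eq_sum_range
        (fun i => addRow n l b (Prod.swap (i, n - i)).1 (Prod.swap (i, n - i)).2)]
    refine sum_congr rfl fun i _ => ?_
    simp only [addRow, Prod.swap]
    rw [dif_pos (by omega)]
  · refine sum_congr rfl fun k hk => sum_congr rfl fun c hc => ?_
    simp only [mem_range, HasAntidiagonal.mem_antidiagonal] at hk hc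
    rw [addRow, dif_neg (by omega)]

/-- The recursively defined `gtSum` is the weight generating function of the (finite) set of
patterns. -/
lemma exists_gtSum_eq {R : Type*} [CommRing R] (q : R) (n : ℕ) (l : Fin n → ℕ) :
    ∃ T : Finset (ℕ → ℕ → ℕ), (∀ b, b ∈ T ↔ IsGT n l b) ∧
      gtSum q n l = ∑ b ∈ T, q ^ gtWeight n b := by
  classical
  induction n with
  | zero =>
    refine ⟨{0}, fun b => ?_, by simp [gtSum, gtWeight]⟩
    rw [mem_singleton]
    constructor
    · rintro rfl; exact ⟨by simp, fun _ i => i.elim0, by intros; omega⟩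
    · intro h; ext d i; exact h.1 d i (Nat.zero_le _)
  | succ n ih =>
    choose T hT hS using ih
    refine ⟨((interlacing l).sigma T).image fun x => addRow n l x.2, fun b => ?_, ?_⟩
    · simp only [mem_image, mem_sigma]
      constructor
      · rintro ⟨⟨m, b'⟩, ⟨hm, hb⟩, rfl⟩
        exact IsGT.addRow hm ((hT _ _).1 hb)
      · intro h
        obtain ⟨m, hm, b', hb', rfl⟩ := h.exists_addRow
        exact ⟨⟨m, b'⟩, ⟨hm, (hT _ _).2 hb'⟩, rfl⟩
    · rw [sum_image, gtSum, sum_sigma, mul_sum]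
      · refine sum_congr rfl fun m _ => ?_
        rw [hS, mul_sum]
        refine sum_congr rfl fun b _ => ?_
        rw [gtWeight_addRow, pow_add]
      · rintro ⟨m, b⟩ hb ⟨m', b'⟩ hb' h
        simp only [coe_sigma, Set.mem_sigma_iff, mem_coe, hT] at hb hb'
        have hbb : b = b' := by
          ext d i
          have := congrFun (congrFun h d) i
          simp only [addRow] at this
          by_cases hd : d + i = n
          · rw [hb.2.1 d i hd.ge, hb'.2.1 d i hd.ge]
          · simpa [hd] using this
        subst hbb
        have : m = m' := by
          ext i
          rw [← hb.2.2.1 (n - 1 - i) i (by omega), ← hb'.2.2.1 (n - 1 - i) i (by omega)]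
        subst this
        rfl

/-! ### Plane partitions as Gelfand–Tsetlin patterns -/

/-- The row `(0^s, t^r)` in strict coordinates, i.e. with the staircase `i ↦ i` added. -/
def topRow (r s t : ℕ) (i : Fin (s + r)) : ℕ := i + if i.val < s then 0 else t

/-- The plane partition `p` with its columns reversed, extended by `0` to all of `ℕ × ℕ`. -/
def ppEntry {r s t : ℕ} (p : Fin r → Fin s → Fin (t + 1)) (d i : ℕ) : ℕ :=
  if h : d < r ∧ i < s then (p ⟨d, h.1⟩ (Fin.rev ⟨i, h.2⟩) : ℕ) else 0

/-- The part of a pattern with longest row `topRow r s t` that does not depend on the plane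
partition: the staircase, plus the entries with `i ≥ s`, which are forced to equal `t`. -/
def frozenEntry (r s t d i : ℕ) : ℕ :=
  if d + i < s + r then i + (if i < s then 0 else t) else 0

/-- The Gelfand–Tsetlin pattern of a plane partition: the entries with `i ≥ s` are forced to be
`t`, those with `d ≥ r` are forced to be `0`, and the remaining `r × s` rectangle holds `p`. -/
def fillPattern {r s t : ℕ} (p : Fin r → Fin s → Fin (t + 1)) (d i : ℕ) : ℕ :=
  frozenEntry r s t d i + ppEntry p d i

lemma ppEntry_of_lt {r s t : ℕ} (p : Fin r → Fin s → Fin (t + 1)) {d i : ℕ} (hd : d < r)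
    (hi : i < s) : ppEntry p d i = p ⟨d, hd⟩ (Fin.rev ⟨i, hi⟩) := dif_pos ⟨hd, hi⟩

lemma ppEntry_of_not_lt {r s t : ℕ} (p : Fin r → Fin s → Fin (t + 1)) {d i : ℕ}
    (h : ¬ (d < r ∧ i < s)) : ppEntry p d i = 0 := dif_neg h

lemma ppEntry_le {r s t : ℕ} (p : Fin r → Fin s → Fin (t + 1)) (d i : ℕ) :
    ppEntry p d i ≤ t := by
  unfold ppEntry
  split_ifs
  · exact Nat.lt_succ_iff.1 (p _ _).2
  · exact Nat.zero_le _

lemma sum_antidiagonal_eq_sum_rectangle (r s : ℕ) (g : ℕ → ℕ → ℕ)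
    (hg : ∀ d i, ¬ (d < r ∧ i < s) → g d i = 0) :
    gtWeight (s + r) g = ∑ d ∈ range r, ∑ i ∈ range s, g d i := by
  rw [← sum_product' (range r) (range s) g, gtWeight,
    ← sum_fiberwise_of_maps_to (s := range r ×ˢ range s) (t := range (s + r))
      (g := fun x => x.1 + x.2)]
  · refine sum_congr rfl fun k _ => (sum_subset ?_ ?_).symm
    · intro x hx
      simp only [mem_filter, HasAntidiagonal.mem_antidiagonal] at *
      exact hx.2
    · intro x hx hx'
      simp only [mem_filter, HasAntidiagonal.mem_antidiagonal, mem_product, mem_range] at *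
      exact hg _ _ fun h => hx' ⟨h, hx⟩
  · intro x hx
    simp only [mem_product, mem_range] at *
    omega

lemma gtWeight_ppEntry {r s t : ℕ} (p : Fin r → Fin s → Fin (t + 1)) :
    gtWeight (s + r) (ppEntry p) = vol p := by
  rw [sum_antidiagonal_eq_sum_rectangle r s _ fun d i h => ppEntry_of_not_lt p h, vol,
    ← Fin.sum_univ_eq_sum_range (fun d => ∑ i ∈ range s, ppEntry p d i)]
  refine sum_congr rfl fun d _ => ?_
  rw [← Fin.sum_univ_eq_sum_range (fun i => ppEntry p d i),
    ← Equiv.sum_comp Fin.revPerm (fun j => (p d j : ℕ))]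
  refine sum_congr rfl fun i _ => ?_
  rw [ppEntry_of_lt p d.2 i.2]
  rfl

lemma gtWeight_fillPattern {r s t : ℕ} (p : Fin r → Fin s → Fin (t + 1)) :
    gtWeight (s + r) (fillPattern p) = gtWeight (s + r) (frozenEntry r s t) + vol p := by
  rw [← gtWeight_ppEntry]
  simp only [gtWeight, fillPattern, sum_add_distrib]

lemma isGT_fillPattern {r s t : ℕ} {p : Fin r → Fin s → Fin (t + 1)} (hp : p ∈ PP r s t) :
    IsGT (s + r) (topRow r s t) (fillPattern p) := by
  have hp' : ∀ d d' i i', d ≤ d' → d' < r → i' ≤ i → i < s →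
      ppEntry p d' i' ≤ ppEntry p d i := by
    intro d d' i i' h1 h2 h3 h4
    rw [ppEntry_of_lt p h2 (by omega), ppEntry_of_lt p (by omega) h4]
    simp only [PP, mem_filter, mem_univ, true_and] at hp
    refine hp _ _ _ _ h1 ?_
    simp only [Fin.le_def, Fin.val_rev]
    omega
  have h0 : ∀ d i, r ≤ d ∨ s ≤ i → ppEntry p d i = 0 := fun d i h =>
    ppEntry_of_not_lt p (by omega)
  refine ⟨fun d i h => ?_, fun d i h => ?_, fun d i h => ?_⟩
  · rw [fillPattern, frozenEntry, if_neg (by omega), h0 d i (by omega)]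
  · have hi := i.2
    rw [fillPattern, frozenEntry, if_pos (by omega), h0 d i (by omega), topRow, add_zero]
  · simp only [fillPattern, frozenEntry]
    rw [if_pos (show d + 1 + i < s + r by omega), if_pos (show d + i < s + r by omega),
      if_pos (show d + (i + 1) < s + r by omega)]
    have hle := ppEntry_le p d i
    constructor
    · by_cases h1 : d + 1 < r ∧ i < s
      · have := hp' d (d + 1) i i (by omega) h1.1 le_rfl h1.2
        omega
      · rw [h0 (d + 1) i (by omega)]; omega
    · by_cases h1 : d < r ∧ i + 1 < s
      · have := hp' d d (i + 1) i le_rfl h1.1 (by omega) h1.2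
        rw [if_pos (show i < s by omega), if_pos h1.2]
        omega
      · by_cases h2 : d < r ∧ i < s
        · rw [if_pos h2.2, if_neg (show ¬ i + 1 < s by omega)]; omega
        · rw [h0 d i (by omega)]; split_ifs <;> omega

lemma IsGT.col_le {n : ℕ} {l : Fin n → ℕ} {b : ℕ → ℕ → ℕ} (hb : IsGT n l b) (d e i : ℕ)
    (h : d + e + i < n) : b (d + e) i ≤ b d i := by
  induction e with
  | zero => exact le_rfl
  | succ e ih => exact (hb.2.2 (d + e) i (by omega)).1.trans (ih (by omega))

lemma IsGT.row_le {n : ℕ} {l : Fin n → ℕ} {b : ℕ → ℕ → ℕ} (hb : IsGT n l b) (d i e : ℕ)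
    (h : d + i + e < n) : b d i + e ≤ b d (i + e) := by
  induction e with
  | zero => exact le_rfl
  | succ e ih =>
    have := (hb.2.2 d (i + e) (by omega)).2
    have := ih (by omega)
    rw [← add_assoc, ← add_assoc]
    omega

lemma IsGT.exists_fillPattern {r s t : ℕ} {b : ℕ → ℕ → ℕ}
    (hb : IsGT (s + r) (topRow r s t) b) : ∃ p ∈ PP r s t, fillPattern p = b := by
  -- Moving along a column (resp. a row) to the longest row bounds an entry below (resp. above);
  -- the two bounds agree outside the `r × s` rectangle.
  have lower : ∀ d i, d + i < s + r → i + (if i < s then 0 else t) ≤ b d i := by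
    intro d i h
    have h1 := hb.col_le d (s + r - 1 - i - d) i (by omega)
    rwa [hb.2.1 _ ⟨i, by omega⟩ (by simp only; omega)] at h1
  have upper : ∀ d i, d + i < s + r → b d i ≤ i + (if d < r then t else 0) := by
    intro d i h
    have h1 := hb.row_le d i (s + r - 1 - d - i) (by omega)
    have h2 := hb.2.1 d ⟨i + (s + r - 1 - d - i), by omega⟩ (by simp only; omega)
    simp only [topRow] at h2
    split_ifs at h2 ⊢ <;> omega
  have bnd : ∀ (d : Fin r) (j : Fin s), b d (Fin.rev j) - (Fin.rev j : ℕ) < t + 1 := by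
    intro d j
    have := upper d (Fin.rev j) (by omega)
    rw [if_pos d.2] at this
    omega
  refine ⟨fun d j => ⟨b d (Fin.rev j) - (Fin.rev j : ℕ), bnd d j⟩, ?_, ?_⟩
  · simp only [PP, mem_filter, mem_univ, true_and]
    intro d d' j j' hd hj
    have h1 := hb.col_le d (d' - d) (Fin.rev j') (by omega)
    rw [Nat.add_sub_cancel' hd] at h1
    have hj2 : (Fin.rev j' : ℕ) ≤ Fin.rev j := by
      simp only [Fin.val_rev]
      have : (j : ℕ) ≤ j' := hj
      omega
    have h2 := hb.row_le d (Fin.rev j') (Fin.rev j - Fin.rev j') (by omega)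
    rw [Nat.add_sub_cancel' hj2] at h2
    omega
  · ext d i
    rw [fillPattern, frozenEntry]
    by_cases h : d + i < s + r
    · have hl := lower d i h
      have hu := upper d i h
      rw [if_pos h]
      by_cases h' : d < r ∧ i < s
      · rw [ppEntry_of_lt _ h'.1 h'.2]
        simp only [Fin.rev_rev]
        rw [if_pos h'.2] at hl ⊢
        omega
      · rw [ppEntry_of_not_lt _ h']
        split_ifs at * <;> omega
    · rw [if_neg h, ppEntry_of_not_lt _ (by omega), hb.1 d i (by omega)]

/-- `fillPattern` is a bijection from plane partitions in the `(r,s,t)`-box onto patterns with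
longest row `topRow r s t`, shifting the weight by a constant. -/
lemma gtSum_topRow {R : Type*} [CommRing R] (q : R) (r s t : ℕ) :
    gtSum q (s + r) (topRow r s t) =
      q ^ gtWeight (s + r) (frozenEntry r s t) * ∑ p ∈ PP r s t, q ^ vol p := by
  obtain ⟨T, hT, hS⟩ := exists_gtSum_eq q (s + r) (topRow r s t)
  rw [hS, mul_sum]
  symm
  refine sum_bij (fun p _ => fillPattern p) (fun p hp => (hT _).2 (isGT_fillPattern hp)) ?_ ?_ ?_
  · intro p _ p' _ h
    ext d j
    have := congrFun (congrFun h d) (Fin.rev j)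
    simp only [fillPattern, ppEntry_of_lt _ d.2 (Fin.rev j).2, Fin.eta, Fin.rev_rev] at this
    omega
  · intro b hb
    obtain ⟨p, hp, rfl⟩ := IsGT.exists_fillPattern ((hT _).1 hb)
    exact ⟨p, hp, rfl⟩
  · intro p _
    rw [gtWeight_fillPattern, pow_add]

/-! ### MacMahon's box formula -/

lemma zero_mem_PP (r s t : ℕ) : (fun _ _ => 0) ∈ PP r s t := by simp [PP]

/-- The volume generating polynomial of the plane partitions in an `(r,s,t)`-box. -/
noncomputable def ppPoly (r s t : ℕ) : ℤ[X] := ∑ p ∈ PP r s t, X ^ vol p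

lemma ppPoly_eval_zero_ne (r s t : ℕ) : (ppPoly r s t).eval 0 ≠ 0 := by
  rw [ppPoly, eval_finsetSum]
  apply ne_of_gt
  refine sum_pos' (fun p _ => ?_) ⟨_, zero_mem_PP r s t, ?_⟩
  · rw [eval_pow, eval_X]; positivity
  · simp [vol]

lemma ppPoly_zero (r s : ℕ) : ppPoly r s 0 = 1 := by
  have h : PP r s 0 = {fun _ _ => 0} := by
    refine Finset.eq_singleton_iff_unique_mem.2 ⟨zero_mem_PP r s 0, fun p _ => ?_⟩
    ext i j; simp
  rw [ppPoly, h]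
  simp [vol]

/-- Powers of `X` may be cancelled between polynomials with nonzero constant term without
comparing the exponents. This avoids computing the monomial factors below. -/
lemma eq_of_X_pow_mul_eq {a b : ℕ} {A B : ℤ[X]} (hA : A.eval 0 ≠ 0) (hB : B.eval 0 ≠ 0)
    (h : X ^ a * A = X ^ b * B) : A = B := by
  wlog hab : a ≤ b generalizing a b A B
  · exact (this hB hA h.symm (by omega)).symm
  obtain ⟨c, rfl⟩ := Nat.exists_eq_add_of_le hab
  rw [pow_add, mul_assoc] at h
  have h' := mul_left_cancel₀ (pow_ne_zero a X_ne_zero) h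
  rcases Nat.eq_zero_or_pos c with rfl | hc
  · simpa using h'
  · exact absurd (by rw [h']; simp [Nat.ne_of_gt hc]) hA

/-- The Vandermonde product of `X ^ l i` with all monomial factors removed. -/
noncomputable def qVandermonde {n : ℕ} (l : Fin n → ℕ) : ℤ[X] :=
  ∏ i, ∏ j, if i < j then X ^ (l j - l i) - 1 else 1

lemma det_vandermonde_X_pow {n : ℕ} (l : Fin n → ℕ) (hl : Monotone l) :
    ∃ e : ℕ, (Matrix.vandermonde fun i => (X : ℤ[X]) ^ l i).det = X ^ e * qVandermonde l := by
  refine ⟨∑ i, ∑ j ∈ Finset.Ioi i, l i, ?_⟩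
  rw [Matrix.det_vandermonde, qVandermonde, ← prod_pow_eq_pow_sum, ← prod_mul_distrib]
  refine prod_congr rfl fun i _ => ?_
  rw [← prod_filter, ← prod_pow_eq_pow_sum]
  have : (univ.filter fun j => i < j) = Finset.Ioi i := by ext; simp
  rw [this, ← prod_mul_distrib]
  refine prod_congr rfl fun j hj => ?_
  have : l i ≤ l j := hl (Finset.mem_Ioi.1 hj).le
  rw [mul_sub, ← pow_add, Nat.add_sub_cancel' this, mul_one]

lemma qVandermonde_eval_zero_ne {n : ℕ} (l : Fin n → ℕ) (hl : StrictMono l) :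
    (qVandermonde l).eval 0 ≠ 0 := by
  rw [qVandermonde, eval_prod]
  refine prod_ne_zero_iff.2 fun i _ => ?_
  rw [eval_prod]
  refine prod_ne_zero_iff.2 fun j _ => ?_
  split_ifs with h
  · have : l j - l i ≠ 0 := by have := hl h; omega
    simp [this]
  · simp

lemma gtDenom_eval_zero_ne (n : ℕ) : (gtDenom (X : ℤ[X]) n).eval 0 ≠ 0 := by
  simp [gtDenom, eval_prod, prod_ne_zero_iff]

lemma topRow_strictMono (r s t : ℕ) : StrictMono (topRow r s t) := by
  intro i j hij
  have : (i : ℕ) < j := hij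
  simp only [topRow]
  split_ifs <;> omega

lemma ppPoly_mul_gtDenom (r s t : ℕ) :
    ppPoly r s t * gtDenom X (s + r) = qVandermonde (topRow r s t) := by
  have hm := topRow_strictMono r s t
  obtain ⟨e, he⟩ := det_vandermonde_X_pow _ hm.monotone
  have h := gtSum_mul_gtDenom (X : ℤ[X]) (s + r) (topRow r s t) hm.monotone
  rw [gtSum_topRow, he, mul_assoc, ← mul_assoc (X ^ _) (X ^ e), ← pow_add] at h
  refine eq_of_X_pow_mul_eq ?_ (qVandermonde_eval_zero_ne _ hm) h
  rw [eval_mul]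
  exact mul_ne_zero (ppPoly_eval_zero_ne r s t) (gtDenom_eval_zero_ne _)

/-- Only the pairs with one index in the block `0^s` and the other in the block `t^r` contribute a
factor depending on `t`. -/
lemma exists_qVandermonde_topRow (r s : ℕ) : ∃ C : ℤ[X], ∀ t, qVandermonde (topRow r s t) =
    C * ∏ i : Fin s, ∏ j : Fin r, (X ^ (s + j - i + t) - 1) := by
  refine ⟨(∏ i : Fin s, ∏ j : Fin s, if i < j then X ^ (j - i : ℕ) - 1 else 1) *
    ∏ i : Fin r, ∏ j : Fin r, if i < j then X ^ (j - i : ℕ) - 1 else 1, fun t => ?_⟩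
  rw [qVandermonde, Fin.prod_univ_add]
  simp only [Fin.prod_univ_add, prod_mul_distrib]
  have h1 : ∀ i j : Fin s, Fin.castAdd r i < Fin.castAdd r j ↔ i < j := fun i j => Iff.rfl
  have h2 : ∀ (i : Fin s) (j : Fin r), Fin.castAdd r i < Fin.natAdd s j := fun i j => by
    simp only [Fin.lt_def, Fin.val_castAdd, Fin.val_natAdd]; omega
  have h3 : ∀ (i : Fin s) (j : Fin r), ¬ Fin.natAdd s j < Fin.castAdd r i := fun i j =>
    (h2 i j).not_gt
  have h4 : ∀ i j : Fin r, Fin.natAdd s i < Fin.natAdd s j ↔ i < j := fun i j => by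
    simp only [Fin.lt_def, Fin.val_natAdd]; omega
  have t1 : ∀ i : Fin s, topRow r s t (Fin.castAdd r i) = i := fun i => by simp [topRow]
  have t2 : ∀ i : Fin r, topRow r s t (Fin.natAdd s i) = s + i + t := fun i => by simp [topRow]
  simp only [h1, h2, h3, h4, t1, t2, if_true, if_false, prod_const_one, one_mul]
  have e1 : ∀ i j : Fin r, s + (j : ℕ) + t - (s + i + t) = j - i := fun i j => by omega
  have e2 : ∀ (i : Fin s) (j : Fin r), s + (j : ℕ) + t - i = s + j - i + t := fun i j => by omega
  simp only [e1, e2]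
  ring

lemma X_pow_sub_one_ne_zero' {k : ℕ} (hk : k ≠ 0) : (X ^ k - 1 : ℤ[X]) ≠ 0 := by
  intro h
  have := congrArg (eval 0) h
  simp [hk] at this

/-- MacMahon's formula for the volume generating function of plane partitions in a box, with
denominators cleared. The numbers `s + j - i` are the hook lengths of the `r × s` rectangle.
The normalization comes from comparing with `t = 0`, where there is one plane partition. -/
theorem macmahon (r s t : ℕ) :
    ppPoly r s t * ∏ i : Fin s, ∏ j : Fin r, ∑ m ∈ range (s + j - i), (X : ℤ[X]) ^ m =
      ∏ i : Fin s, ∏ j : Fin r, ∑ m ∈ range (s + j - i + t), X ^ m := by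
  obtain ⟨C, hC⟩ := exists_qVandermonde_topRow r s
  have h0 := ppPoly_mul_gtDenom r s 0
  rw [ppPoly_zero, one_mul] at h0
  have ht := ppPoly_mul_gtDenom r s t
  have hD : gtDenom (X : ℤ[X]) (s + r) ≠ 0 := by
    intro h
    exact gtDenom_eval_zero_ne (s + r) (by rw [h, eval_zero])
  rw [h0] at ht
  rw [h0, hC] at hD
  rw [hC, hC] at ht
  have hC0 := left_ne_zero_of_mul hD
  have key : ppPoly r s t * ∏ i : Fin s, ∏ j : Fin r, ((X : ℤ[X]) ^ (s + j - i + 0) - 1) =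
      ∏ i : Fin s, ∏ j : Fin r, (X ^ (s + j - i + t) - 1) :=
    mul_left_cancel₀ hC0 (by rw [← ht]; ring)
  simp only [← geom_sum_mul, prod_mul_distrib, ← mul_assoc] at key
  refine mul_right_cancel₀ ?_ key
  refine prod_ne_zero_iff.2 fun i _ => prod_ne_zero_iff.2 fun j _ => ?_
  simpa using X_pow_sub_one_ne_zero' one_ne_zero

lemma macmahon_complex (r s t : ℕ) (z : ℂ) :
    (∑ p ∈ PP r s t, z ^ vol p) *
        ∏ i : Fin s, ∏ j : Fin r, ∑ m ∈ range (s + j - i), z ^ m =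
      ∏ i : Fin s, ∏ j : Fin r, ∑ m ∈ range (s + j - i + t), z ^ m := by
  have := congrArg (aeval z) (macmahon r s t)
  simpa [ppPoly, map_sum, map_prod] using this

/-! ### Characteristic functions -/

instance : IsProbabilityMeasure unif01 :=
  ⟨by simp [unif01]⟩

lemma charFun_unif01 {u : ℝ} (hu : u ≠ 0) :
    charFun unif01 u = (Complex.exp (u * Complex.I) - 1) / (u * Complex.I) := by
  have hc : (u * Complex.I : ℂ) ≠ 0 := by simp [hu]
  have h := integral_exp_mul_complex (a := 0) (b := 1) hc
  rw [intervalIntegral.integral_of_le zero_le_one, ← integral_Icc_eq_integral_Ioc] at h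
  rw [charFun_apply_real, unif01]
  simp only [Complex.ofReal_one, Complex.ofReal_zero, mul_one, mul_zero, Complex.exp_zero] at h
  rw [← h]
  congr 1; ext x; congr 1; ring

lemma charFun_unifConv (n : ℕ) (u : ℝ) : charFun (unifConv n) u = charFun unif01 u ^ n := by
  have := ProbabilityTheory.charFun_map_sum_pi_eq_prod (μ := fun _ : Fin n => unif01)
  rw [unifConv, this]
  simp

instance (n : ℕ) : IsProbabilityMeasure (unifConv n) :=
  Measure.isProbabilityMeasure_map (by fun_prop)

/-- The complex number `exp (i u / t)`. -/
noncomputable def expRoot (u : ℝ) (t : ℕ) : ℂ := Complex.exp (u * Complex.I * (t : ℂ)⁻¹)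

lemma tendsto_expRoot (u : ℝ) : Tendsto (expRoot u) atTop (nhds 1) := by
  have h : Tendsto (fun t : ℕ => u * Complex.I * (t : ℂ)⁻¹) atTop (nhds (u * Complex.I * 0)) :=
    tendsto_inv_atTop_nhds_zero_nat.const_mul _
  have h' := (Complex.continuous_exp.tendsto _).comp h
  rw [mul_zero, Complex.exp_zero] at h'
  exact h'

lemma tendsto_expRoot_sub_one_mul (u : ℝ) :
    Tendsto (fun t : ℕ => (expRoot u t - 1) * t) atTop (nhds (u * Complex.I)) := by
  have hd : HasDerivAt (fun y : ℂ => Complex.exp (u * Complex.I * y)) (u * Complex.I) 0 := by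
    simpa using ((hasDerivAt_id (0 : ℂ)).const_mul (u * Complex.I)).cexp
  have ht : Tendsto (fun t : ℕ => (t : ℂ)⁻¹) atTop (nhdsWithin 0 {0}ᶜ) := by
    refine tendsto_nhdsWithin_iff.2 ⟨tendsto_inv_atTop_nhds_zero_nat, ?_⟩
    filter_upwards [eventually_gt_atTop 0] with t ht
    simp [ht.ne']
  refine (hd.tendsto_slope_zero.comp ht).congr fun t => ?_
  simp [expRoot, mul_comm]

/-- The normalized `q`-integer `[a + t]_q / (a + t)` at `q = exp (i u / t)` tends to the
characteristic function of the uniform distribution. -/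
lemma tendsto_geom_sum_div (u : ℝ) (a : ℕ) :
    Tendsto (fun t : ℕ => (∑ m ∈ range (a + t), expRoot u t ^ m) / ((a + t : ℕ) : ℂ)) atTop
      (nhds (charFun unif01 u)) := by
  rcases eq_or_ne u 0 with rfl | hu
  · have : charFun unif01 (0 : ℝ) = 1 := by simp
    rw [this]
    refine tendsto_const_nhds.congr' ?_
    filter_upwards [eventually_gt_atTop 0] with t ht
    have : ((a + t : ℕ) : ℂ) ≠ 0 := by exact_mod_cast (by omega : a + t ≠ 0)
    simp only [expRoot, Complex.ofReal_zero, zero_mul, Complex.exp_zero, one_pow, sum_const,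
      card_range, nsmul_eq_mul, mul_one]
    exact (div_self this).symm
  · have hc : (u * Complex.I : ℂ) ≠ 0 := by simp [hu]
    rw [charFun_unif01 hu]
    have h1 := tendsto_expRoot_sub_one_mul u
    have hr := tendsto_expRoot u
    have hden : Tendsto (fun t : ℕ => (expRoot u t - 1) * a + (expRoot u t - 1) * t) atTop
        (nhds (u * Complex.I)) := by
      simpa using ((hr.sub_const 1).mul_const (a : ℂ)).add h1
    have hnum : Tendsto (fun t : ℕ => expRoot u t ^ a * Complex.exp (u * Complex.I) - 1) atTop
        (nhds (Complex.exp (u * Complex.I) - 1)) := by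
      simpa using ((hr.pow a).mul_const (Complex.exp (u * Complex.I))).sub_const 1
    refine (hnum.div hden hc).congr' ?_
    filter_upwards [h1.eventually_ne hc, eventually_gt_atTop 0] with t ht ht0
    have hz : expRoot u t ≠ 1 := by
      intro h; simp [h] at ht
    have ht' : (t : ℂ) ≠ 0 := by exact_mod_cast ht0.ne'
    have hpow : expRoot u t ^ t = Complex.exp (u * Complex.I) := by
      rw [expRoot, ← Complex.exp_nat_mul]
      congr 1
      field_simp
    rw [Pi.div_apply, geom_sum_eq hz, div_div, pow_add, hpow]
    push_cast
    rw [mul_add]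

/-- The law of `X_t / t`, with `X_t` the volume of a uniformly random plane partition. -/
noncomputable def volLaw (r s t : ℕ) : Measure ℝ :=
  ((PP r s t).card : ENNReal)⁻¹ • ∑ p ∈ PP r s t, Measure.dirac ((vol p : ℝ) / t)

lemma card_PP_ne_zero (r s t : ℕ) : (PP r s t).card ≠ 0 :=
  (Finset.card_pos.2 ⟨_, zero_mem_PP r s t⟩).ne'

instance (r s t : ℕ) : IsProbabilityMeasure (volLaw r s t) := by
  constructor
  simp only [volLaw, Measure.smul_apply, Measure.finsetSum_apply, measure_univ, sum_const,
    nsmul_eq_mul, mul_one, smul_eq_mul]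
  exact ENNReal.inv_mul_cancel (by exact_mod_cast card_PP_ne_zero r s t)
    (ENNReal.natCast_ne_top _)

lemma integral_volLaw {E : Type*} [NormedAddCommGroup E] [NormedSpace ℝ E] [CompleteSpace E]
    (r s t : ℕ) (f : ℝ → E) :
    ∫ x, f x ∂(volLaw r s t) = ((PP r s t).card : ℝ)⁻¹ • ∑ p ∈ PP r s t, f ((vol p : ℝ) / t) := by
  rw [volLaw, integral_smul_measure, integral_finsetSum_measure]
  · simp
  · intro p _
    exact integrable_dirac (by simp)

lemma charFun_volLaw (r s t : ℕ) (u : ℝ) :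
    charFun (volLaw r s t) u = (∑ p ∈ PP r s t, expRoot u t ^ vol p) / (PP r s t).card := by
  rw [charFun_apply_real, integral_volLaw, Complex.real_smul, div_eq_inv_mul]
  push_cast
  congr 1
  refine sum_congr rfl fun p _ => ?_
  rw [expRoot, ← Complex.exp_nat_mul]
  congr 1
  ring

/-- The characteristic function of `X_t / t` is the quotient of MacMahon's product at
`q = exp (i u / t)` by its value at `q = 1`; each of the `r s` factors converges to the
characteristic function of the uniform distribution. -/
lemma tendsto_charFun_volLaw (r s : ℕ) (u : ℝ) :
    Tendsto (fun t => charFun (volLaw r s t) u) atTop (nhds (charFun (unifConv (r * s)) u)) := by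
  have hsum : ∀ a : ℕ, Tendsto (fun t => ∑ m ∈ range a, expRoot u t ^ m) atTop (nhds (a : ℂ)) := by
    intro a
    simpa using tendsto_finsetSum (range a) fun m _ => (tendsto_expRoot u).pow m
  have hpos : ∀ (i : Fin s) (j : Fin r), ((s + j - i : ℕ) : ℂ) ≠ 0 := fun i j => by
    exact_mod_cast (by omega : s + (j : ℕ) - i ≠ 0)
  have hfac : ∀ (i : Fin s) (j : Fin r), Tendsto (fun t : ℕ =>
      (∑ m ∈ range (s + j - i + t), expRoot u t ^ m) / ((s + j - i + t : ℕ) : ℂ) *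
        (((s + j - i : ℕ) : ℂ) / ∑ m ∈ range (s + j - i), expRoot u t ^ m)) atTop
      (nhds (charFun unif01 u)) := by
    intro i j
    have h := (tendsto_geom_sum_div u (s + j - i)).mul
      ((tendsto_const_nhds (x := ((s + j - i : ℕ) : ℂ))).div (hsum (s + j - i)) (hpos i j))
    rwa [div_self (hpos i j), mul_one] at h
  have hprod := tendsto_finsetProd (univ : Finset (Fin s)) fun i _ =>
    tendsto_finsetProd (univ : Finset (Fin r)) fun j _ => hfac i j
  have hlim : charFun (unifConv (r * s)) u =
      ∏ _i : Fin s, ∏ _j : Fin r, charFun unif01 u := by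
    simp [charFun_unifConv, pow_mul]
  rw [hlim]
  refine hprod.congr' ?_
  have hne : ∀ᶠ t in atTop, ∀ (i : Fin s) (j : Fin r),
      ∑ m ∈ range (s + j - i), expRoot u t ^ m ≠ 0 :=
    eventually_all.2 fun i => eventually_all.2 fun j => (hsum _).eventually_ne (hpos i j)
  filter_upwards [hne] with t ht
  have hE := macmahon_complex r s t (expRoot u t)
  have h1 := macmahon_complex r s t 1
  simp only [one_pow, sum_const, nsmul_eq_mul, mul_one, card_range] at h1
  have hA : ∏ i : Fin s, ∏ j : Fin r, ∑ m ∈ range (s + j - i), expRoot u t ^ m ≠ 0 :=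
    prod_ne_zero_iff.2 fun i _ => prod_ne_zero_iff.2 fun j _ => ht i j
  have hB : ∏ i : Fin s, ∏ j : Fin r, ((s + j - i : ℕ) : ℂ) ≠ 0 :=
    prod_ne_zero_iff.2 fun i _ => prod_ne_zero_iff.2 fun j _ => hpos i j
  have hc : ((PP r s t).card : ℂ) ≠ 0 := by exact_mod_cast card_PP_ne_zero r s t
  rw [charFun_volLaw]
  simp only [prod_mul_distrib, prod_div_distrib]
  rw [← hE, ← h1]
  field_simp

/-- For fixed `r, s`, as `t → ∞` the rescaled volumes `Z_t = X_t/t` of uniformly random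
plane partitions in `(r,s,t)`-boxes converge in distribution to the `rs`-fold convolution
of the uniform distribution on `[0,1]`; i.e., for every bounded continuous test function `f`,
the expectation `E[f(Z_t)]` converges to the integral of `f` against that convolution. -/
theorem volume_limit_nonconcentrated_PP (r s : ℕ) (hr : 0 < r) (hs : 0 < s) :
    ∀ f : BoundedContinuousFunction ℝ ℝ,
      Tendsto (fun t : ℕ =>
        (∑ p ∈ PP r s t, f ((vol p : ℝ) / (t : ℝ))) / ((PP r s t).card : ℝ))
        atTop (nhds (∫ x, f x ∂(unifConv (r * s)))) := by
  intro f
  have h : Tendsto (β := ProbabilityMeasure ℝ) (fun t : ℕ => ⟨volLaw r s t, inferInstance⟩) atTop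
      (nhds ⟨unifConv (r * s), inferInstance⟩) :=
    ProbabilityMeasure.tendsto_iff_tendsto_charFun.2 (tendsto_charFun_volLaw r s)
  refine (ProbabilityMeasure.tendsto_iff_forall_integral_tendsto.1 h f).congr fun t => ?_
  rw [ProbabilityMeasure.coe_mk, integral_volLaw, smul_eq_mul, div_eq_inv_mul]
end

section
/- Fix a positive integer r. For each positive integer t let X_t be the volume random variable on SPP(r,t) equipped with the uniform probability distribution. Then the rescaled random variables Z_t = X_t / t converge in distribution, as t → ∞, to the convolution of r copies of the uniform distribution on [0,1] with r(r−1)/2 copies of the uniform distribution on [0,2] (i.e. to the sum of r independent uniform-[0,1] random variables and r(r−1)/2 independent uniform-[0,2] random variables, all independent). -/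
/-!
Rescaling by `t` turns symmetric plane partitions in the `(r,r,t)`-box into the lattice points of
mesh `1/t` in the order polytope `K` of the staircase `{(i,j) : i ≤ j}`, and turns the volume into
the linear form `w(x) = ∑ x_{ii} + 2 ∑_{i<j} x_{ij}`. By convergence of Riemann sums
(`tendsto_riemann`) the limit law is therefore the law of `w` under the normalized Lebesgue measure
of `K`, and it remains to identify it (`integral_orderPoly`). This is done through its Laplace
transform, which determines a measure of bounded support (`ext_of_mgf_neg`).

Fix the diagonal `l` of `x ∈ K`. The remaining entries form a Gelfand–Tsetlin pattern below `l`,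
each successive diagonal interlacing the previous one. Integrating `exp(-2s·sum)` over it one
diagonal at a time keeps reproducing a Vandermonde determinant, so that the result is a constant
times `s^{-r(r-1)/2} det V(exp(-2 s l_i))` (`integral_patterns`). The substitution
`u_i = exp(-s l_i)` reduces the Laplace transform to the integral of `det V(u_i²)` over
`{q ≤ u_0 ≤ ⋯ ≤ u_{r-1} ≤ 1}` with `q = exp(-s)` (`laplace_orderPoly`).

As a function of the lower bound `a`, that integral is a polynomial `Q(a)` of degree at most `r²`
(`exists_poly_vandermonde`). The size of the integrand and of the domain shows that `Q` vanishes at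
`a = 1` to order `r(r-1)/2 + r` (`bound_at_one`). It also vanishes at `a = -1` to order
`r(r-1)/2` (`bound_at_neg_one`): after symmetrization the integrand becomes
`∏_{i<j} |u_j - u_i| (u_j + u_i)`, and when the coordinates are ordered by absolute value this is
odd in the coordinate of second smallest absolute value. Hence, for `a ≤ 0`, the integral cancels
except where all but one of the coordinates lie in `[-a, 1]`. The degree bound leaves only a constant,
`Q(a) = κ (1-a)^{r(r-1)/2+r} (1+a)^{r(r-1)/2}` (`integral_ordCube`), and at `a = exp(-s)` this is,
up to powers of `s`, the Laplace transform of the convolution of uniform laws. No value of a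
constant is needed: both sides are normalized by their total mass.
-/

open Finset Filter MeasureTheory

/-- Symmetric plane partitions inside an `(r,r,t)`-box. -/
def SPP (r t : ℕ) : Finset (Fin r → Fin r → Fin (t + 1)) :=
  (PP r r t).filter fun p => ∀ i j, p i j = p j i

/-- The convolution of `a` copies of the uniform distribution on `[0,1]` with `b` copies of
the uniform distribution on `[0,2]`: the law of the sum of `a` independent uniform-`[0,1]`
random variables and `b` independent uniform-`[0,2]` random variables (a uniform-`[0,2]`
variable being twice a uniform-`[0,1]` variable), all independent. -/
noncomputable def unifConvMix (a b : ℕ) : Measure ℝ :=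
  Measure.map (fun x : Fin (a + b) → ℝ => ∑ i : Fin (a + b), if (i : ℕ) < a then x i else 2 * x i)
    (Measure.pi fun _ => unif01)

/-! ### Uniqueness of the Laplace transform -/

open ProbabilityTheory in
/-- Finite measures on `ℝ` with all exponential moments are determined by their Laplace transform on
`(0, ∞)`: the complex moment generating functions are entire and agree on the negative real axis. -/
lemma ext_of_mgf_neg {μ ν : Measure ℝ} [IsFiniteMeasure μ] [IsFiniteMeasure ν]
    (hμ : ∀ t : ℝ, Integrable (fun x => Real.exp (t * x)) μ)
    (hν : ∀ t : ℝ, Integrable (fun x => Real.exp (t * x)) ν)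
    (h : ∀ s : ℝ, 0 < s → ∫ x, Real.exp (-s * x) ∂μ = ∫ x, Real.exp (-s * x) ∂ν) : μ = ν := by
  have huniv (ρ : Measure ℝ) (hρ : ∀ t : ℝ, Integrable (fun x => Real.exp (t * x)) ρ) :
      integrableExpSet id ρ = Set.univ := by
    ext t
    simpa [integrableExpSet] using hρ t
  have han (ρ : Measure ℝ) (hρ : ∀ t : ℝ, Integrable (fun x => Real.exp (t * x)) ρ) :
      AnalyticOnNhd ℂ (complexMGF id ρ) Set.univ := by
    have := analyticOnNhd_complexMGF (X := (id : ℝ → ℝ)) (μ := ρ)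
    simpa [huniv ρ hρ] using this
  apply Measure.ext_of_complexMGF_id_eq
  refine (han μ hμ).eq_of_frequently_eq (han ν hν) (z₀ := ((-1 : ℝ) : ℂ)) ?_
  have hreal : ∃ᶠ x : ℝ in nhdsWithin (-1 : ℝ) {(-1 : ℝ)}ᶜ,
      complexMGF id μ x = complexMGF id ν x := by
    have hev : ∀ᶠ x : ℝ in nhdsWithin (-1 : ℝ) {(-1 : ℝ)}ᶜ,
      complexMGF id μ x = complexMGF id ν x := by
      have h0 : ∀ᶠ x : ℝ in nhds (-1 : ℝ), x < 0 := Iio_mem_nhds (by norm_num)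
      filter_upwards [nhdsWithin_le_nhds h0] with x hx
      rw [complexMGF_ofReal, complexMGF_ofReal]
      have := h (-x) (by linarith)
      simp only [neg_neg] at this
      simp [mgf, this]
    exact hev.frequently
  rw [frequently_iff_seq_forall] at hreal ⊢
  obtain ⟨xs, hx, hxe⟩ := hreal
  refine ⟨fun n => xs n, ?_, fun n => hxe n⟩
  rw [tendsto_nhdsWithin_iff] at hx ⊢
  constructor
  · exact (Complex.continuous_ofReal.tendsto _).comp hx.1
  · filter_upwards [hx.2] with n hn
    simp only [Set.mem_compl_iff, Set.mem_singleton_iff] at hn ⊢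
    exact_mod_cast hn

/-! ### Polynomials determined by orders of vanishing -/

open Polynomial in
/-- A polynomial that is `O(|x - c|^m)` along some filter approaching `c` is divisible by
`(X - c)^m`. -/
lemma pow_dvd_of_bound (Q : ℝ[X]) (c C : ℝ) (m : ℕ) (l : Filter ℝ) [l.NeBot]
    (hl : l ≤ nhdsWithin c {c}ᶜ) (h : ∀ᶠ x in l, |Q.eval x| ≤ C * |x - c| ^ m) :
    (X - Polynomial.C c) ^ m ∣ Q := by
  by_cases hQ : Q = 0
  · simp [hQ]
  rw [← le_rootMultiplicity_iff hQ]
  by_contra! hlt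
  set k := rootMultiplicity c Q with hk
  obtain ⟨S, hS, hndvd⟩ := exists_eq_pow_rootMultiplicity_mul_and_not_dvd Q hQ c
  rw [dvd_iff_isRoot, IsRoot] at hndvd
  apply hndvd
  rw [← hk] at hS
  have hb : ∀ᶠ x in l, |S.eval x| ≤ C * |x - c| ^ (m - k) := by
    filter_upwards [h, hl self_mem_nhdsWithin] with x hx hxc
    have hxc' : 0 < |x - c| := abs_pos.mpr (sub_ne_zero.mpr hxc)
    have e : |Q.eval x| = |x - c| ^ k * |S.eval x| := by
      rw [hS]; simp [abs_mul, abs_pow]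
    have e2 : |x - c| ^ m = |x - c| ^ k * |x - c| ^ (m - k) := by
      rw [← pow_add]; congr 1; omega
    rw [e, e2] at hx
    have hp : 0 < |x - c| ^ k := by positivity
    nlinarith
  have hl' : l ≤ nhds c := hl.trans nhdsWithin_le_nhds
  have t1 : Tendsto (fun x => |S.eval x|) l (nhds |S.eval c|) :=
    ((S.continuous.abs).tendsto c).mono_left hl'
  have t2 : Tendsto (fun x => C * |x - c| ^ (m - k)) l (nhds (C * |c - c| ^ (m - k))) := by
    have : Continuous (fun x : ℝ => C * |x - c| ^ (m - k)) := by fun_prop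
    exact (this.tendsto c).mono_left hl'
  have := le_of_tendsto_of_tendsto t1 t2 hb
  rw [sub_self, abs_zero, zero_pow (by omega), mul_zero] at this
  exact abs_eq_zero.mp (le_antisymm this (abs_nonneg _))

open Polynomial in
/-- Prescribed orders of vanishing at `1` and `-1` determine a polynomial up to a constant as soon
as they add up to the degree bound. -/
lemma poly_eq_of_bounds (Q : ℝ[X]) (m k : ℕ) (hdeg : Q.natDegree ≤ m + k) (C₁ C₂ : ℝ)
    (h₁ : ∀ a : ℝ, 0 ≤ a → a < 1 → |Q.eval a| ≤ C₁ * (1 - a) ^ m)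
    (h₂ : ∀ a : ℝ, 0 ≤ a → a < 1 → |Q.eval (-a)| ≤ C₂ * (1 - a) ^ k) :
    ∃ κ : ℝ, ∀ a : ℝ, Q.eval a = κ * ((1 - a) ^ m * (1 + a) ^ k) := by
  have d1 : (X - Polynomial.C (1 : ℝ)) ^ m ∣ Q := by
    refine pow_dvd_of_bound Q 1 C₁ m (nhdsWithin 1 (Set.Iio 1))
      (nhdsWithin_mono _ (fun x hx => ne_of_lt hx)) ?_
    have h0 : ∀ᶠ x : ℝ in nhds (1 : ℝ), 0 < x := Ioi_mem_nhds (by norm_num)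
    filter_upwards [nhdsWithin_le_nhds h0, self_mem_nhdsWithin] with x hx hx1
    have hx1' : x < 1 := hx1
    rw [abs_sub_comm, abs_of_pos (by linarith : (0 : ℝ) < 1 - x)]
    exact h₁ x hx.le hx1
  have d2 : (X - Polynomial.C (-1 : ℝ)) ^ k ∣ Q := by
    refine pow_dvd_of_bound Q (-1) C₂ k (nhdsWithin (-1) (Set.Ioi (-1)))
      (nhdsWithin_mono _ (fun x hx => ne_of_gt hx)) ?_
    have h0 : ∀ᶠ x : ℝ in nhds (-1 : ℝ), x < 0 := Iio_mem_nhds (by norm_num)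
    filter_upwards [nhdsWithin_le_nhds h0, self_mem_nhdsWithin] with x hx hx1
    have hx1' : -1 < x := hx1
    rw [abs_of_pos (by linarith : (0 : ℝ) < x - -1)]
    have := h₂ (-x) (by linarith) (by linarith)
    simpa [add_comm] using this
  have hcop : IsCoprime ((X - Polynomial.C (1 : ℝ)) ^ m) ((X - Polynomial.C (-1 : ℝ)) ^ k) :=
    (isCoprime_X_sub_C_of_isUnit_sub (by norm_num)).pow
  obtain ⟨S, hS⟩ := hcop.mul_dvd d1 d2
  have hmon : ((X - Polynomial.C (1 : ℝ)) ^ m * (X - Polynomial.C (-1 : ℝ)) ^ k).Monic :=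
    ((monic_X_sub_C _).pow _).mul ((monic_X_sub_C _).pow _)
  have hS0 : S.natDegree = 0 := by
    by_cases hz : S = 0
    · simp [hz]
    have := congrArg natDegree hS
    rw [hmon.natDegree_mul' hz, ((monic_X_sub_C _).pow _).natDegree_mul ((monic_X_sub_C _).pow _),
      natDegree_pow, natDegree_pow, natDegree_X_sub_C, natDegree_X_sub_C] at this
    omega
  rw [eq_C_of_natDegree_eq_zero hS0] at hS
  refine ⟨S.coeff 0 * (-1) ^ m, fun a => ?_⟩
  rw [hS]
  simp only [eval_mul, eval_pow, eval_sub, eval_X, eval_C]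
  rw [show a - 1 = (-1) * (1 - a) by ring, mul_pow]
  ring

/-! ### The symmetrized kernel and its integral near the endpoint 1 -/

/-- The kernel `∏_{i<j} |u_j - u_i| (u_j + u_i)`: the symmetric function which equals the
Vandermonde determinant of the squares when `u` is increasing. -/
noncomputable def symKer {n : ℕ} (u : Fin n → ℝ) : ℝ :=
  |(Matrix.vandermonde u).det| * ∏ i, ∏ j ∈ Finset.Ioi i, (u j + u i)

lemma continuous_det_vandermonde {n : ℕ} :
    Continuous fun u : Fin n → ℝ => (Matrix.vandermonde u).det := by
  simp only [Matrix.det_vandermonde]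
  fun_prop

lemma continuous_symKer {n : ℕ} : Continuous (symKer (n := n)) := by
  unfold symKer
  have := continuous_det_vandermonde (n := n)
  fun_prop

lemma det_vandermonde_sq {n : ℕ} (u : Fin n → ℝ) :
    (Matrix.vandermonde fun i => u i ^ 2).det =
      (Matrix.vandermonde u).det * ∏ i, ∏ j ∈ Finset.Ioi i, (u j + u i) := by
  simp only [Matrix.det_vandermonde, ← Finset.prod_mul_distrib]
  refine Finset.prod_congr rfl fun i _ => Finset.prod_congr rfl fun j _ => ?_
  ring

lemma symKer_eq {n : ℕ} (u : Fin n → ℝ) :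
    symKer u = (SignType.sign (Matrix.vandermonde u).det : ℝ) *
      (Matrix.vandermonde fun i => u i ^ 2).det := by
  rw [det_vandermonde_sq, symKer, ← mul_assoc, sign_mul_self]

lemma abs_symKer {n : ℕ} (u : Fin n → ℝ) :
    |symKer u| = |(Matrix.vandermonde fun i => u i ^ 2).det| := by
  rw [symKer, det_vandermonde_sq, abs_mul, abs_mul, abs_abs]

lemma symKer_perm {n : ℕ} (σ : Equiv.Perm (Fin n)) (u : Fin n → ℝ) :
    symKer (u ∘ σ) = symKer u := by
  have h (v : Fin n → ℝ) : (Matrix.vandermonde (v ∘ σ)).det =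
      (Equiv.Perm.sign σ : ℤ) * (Matrix.vandermonde v).det := by
    rw [← Matrix.det_permute]; rfl
  rw [symKer_eq, symKer_eq, h,
    show (fun i => (u ∘ σ) i ^ 2) = (fun i => u i ^ 2) ∘ σ from rfl, h]
  rcases Int.units_eq_one_or (Equiv.Perm.sign σ) with hs | hs <;> simp [hs, Left.sign_neg]

lemma symKer_eq_zero {n : ℕ} (u : Fin n → ℝ) (h : ¬ Function.Injective fun i => u i ^ 2) :
    symKer u = 0 := by
  rw [symKer_eq]
  have : (Matrix.vandermonde fun i => u i ^ 2).det = 0 := by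
    by_contra h'
    exact h (Matrix.det_vandermonde_ne_zero_iff.mp h')
  rw [this, mul_zero]

lemma measurableSet_strictMono {n : ℕ} {h : ℝ → ℝ} (hh : Measurable h) :
    MeasurableSet {u : Fin n → ℝ | StrictMono fun i => h (u i)} := by
  have : {u : Fin n → ℝ | StrictMono fun i => h (u i)} =
      ⋂ i : Fin n, ⋂ j : Fin n, ⋂ _ : i < j, {u | h (u i) < h (u j)} := by
    ext u; simp [StrictMono]
  rw [this]
  refine MeasurableSet.iInter fun i => MeasurableSet.iInter fun j => MeasurableSet.iInter fun _ => ?_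
  exact measurableSet_lt (hh.comp (measurable_pi_apply i)) (hh.comp (measurable_pi_apply j))

/-- A symmetric function on a cube integrates to `n!` times its integral over the chamber where the
coordinates are strictly increasing for the key `h`. Ties between keys need not form a null set
for a general `h`, so `F` is required to vanish there. -/
lemma integral_symm_eq {n : ℕ} (F : (Fin n → ℝ) → ℝ) (h : ℝ → ℝ) (hh : Measurable h) (S : Set ℝ)
    (hS : MeasurableSet S) (hF : IntegrableOn F (Set.univ.pi fun _ => S))
    (hsymm : ∀ (σ : Equiv.Perm (Fin n)) u, F (u ∘ σ) = F u)
    (hzero : ∀ u, (¬ Function.Injective fun i => h (u i)) → F u = 0) :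
    ∫ u in Set.univ.pi fun _ => S, F u =
      n.factorial * ∫ u in (Set.univ.pi fun _ => S) ∩ {u | StrictMono fun i => h (u i)}, F u := by
  classical
  set B : Set (Fin n → ℝ) := Set.univ.pi fun _ => S with hB
  have hBm : MeasurableSet B := MeasurableSet.univ_pi fun _ => hS
  set M : Set (Fin n → ℝ) := {u | StrictMono fun i => h (u i)} with hM
  have hMm : MeasurableSet M := measurableSet_strictMono hh
  -- the permuted copies of the fundamental domain
  let T (σ : Equiv.Perm (Fin n)) : (Fin n → ℝ) ≃ᵐ (Fin n → ℝ) :=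
    MeasurableEquiv.piCongrLeft (fun _ => ℝ) σ
  have hT (σ : Equiv.Perm (Fin n)) (u : Fin n → ℝ) : T σ u = u ∘ σ.symm := by
    ext i
    simp only [T, MeasurableEquiv.coe_piCongrLeft, Function.comp]
    obtain ⟨j, rfl⟩ := σ.surjective i
    rw [Equiv.piCongrLeft_apply_apply]
    simp
  have hTm (σ : Equiv.Perm (Fin n)) : MeasurePreserving (T σ) volume volume :=
    volume_measurePreserving_piCongrLeft (fun _ => ℝ) σ
  have hpt (u : Fin n → ℝ) : B.indicator F u =
      ∑ σ : Equiv.Perm (Fin n), (B ∩ M).indicator F (T σ u) := by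
    have hBT (σ : Equiv.Perm (Fin n)) : T σ u ∈ B ↔ u ∈ B := by
      rw [hT]
      simp only [hB, Set.mem_univ_pi, Function.comp]
      exact ⟨fun H i => by simpa using H (σ i), fun H i => H _⟩
    have hFT (σ : Equiv.Perm (Fin n)) : F (T σ u) = F u := by rw [hT, hsymm]
    by_cases hu : u ∈ B
    swap
    · rw [Set.indicator_of_notMem hu]
      symm
      refine Finset.sum_eq_zero fun σ _ => Set.indicator_of_notMem (fun hc => hu ?_) _
      exact (hBT σ).mp hc.1
    rw [Set.indicator_of_mem hu]
    by_cases hinj : Function.Injective fun i => h (u i)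
    swap
    · rw [hzero u hinj]
      symm
      refine Finset.sum_eq_zero fun σ _ => ?_
      rw [Set.indicator_apply_eq_zero]
      intro _
      rw [hFT, hzero u hinj]
    set τ := Tuple.sort fun i => h (u i) with hτ
    have hτm : StrictMono fun i => h (u (τ i)) :=
      (Tuple.monotone_sort fun i => h (u i)).strictMono_of_injective (hinj.comp τ.injective)
    rw [Finset.sum_eq_single τ.symm]
    · rw [Set.indicator_of_mem, hFT]
      refine ⟨(hBT _).mpr hu, ?_⟩
      rw [hT]
      exact hτm
    · intro σ _ hσ
      apply Set.indicator_of_notMem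
      rintro ⟨-, hc⟩
      apply hσ
      rw [hT] at hc
      have hc' : StrictMono fun i => h (u (σ.symm i)) := hc
      have hr : Set.range (fun i => h (u (σ.symm i))) = Set.range (fun i => h (u (τ i))) := by
        rw [show (fun i => h (u (σ.symm i))) = (fun i => h (u i)) ∘ σ.symm from rfl,
          show (fun i => h (u (τ i))) = (fun i => h (u i)) ∘ τ from rfl,
          σ.symm.surjective.range_comp, τ.surjective.range_comp]
      have he := (StrictMono.range_inj hc' hτm).mp hr
      have : σ.symm = τ := by
        ext i
        exact congrArg _ (hinj (congrFun he i))
      rw [← this, Equiv.symm_symm]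
    · simp
  have hInt : Integrable ((B ∩ M).indicator F) :=
    (hF.mono_set Set.inter_subset_left).integrable_indicator (hBm.inter hMm)
  rw [← integral_indicator hBm]
  simp_rw [hpt]
  rw [integral_finsetSum]
  · simp_rw [fun σ => (hTm σ).integral_comp' (f := T σ) ((B ∩ M).indicator F)]
    rw [integral_indicator (hBm.inter hMm)]
    simp [Fintype.card_perm]
  · intro σ _
    exact (hTm σ).integrable_comp_emb (T σ).measurableEmbedding |>.mpr hInt

lemma isCompact_cube {n : ℕ} (a b : ℝ) : IsCompact (Set.univ.pi fun _ : Fin n => Set.Icc a b) :=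
  isCompact_univ_pi fun _ => isCompact_Icc

lemma integrableOn_symKer {n : ℕ} (a : ℝ) :
    IntegrableOn (symKer (n := n)) (Set.univ.pi fun _ => Set.Icc a 1) :=
  continuous_symKer.continuousOn.integrableOn_compact (isCompact_cube a 1)

lemma measurableSet_monotone {n : ℕ} : MeasurableSet {u : Fin n → ℝ | Monotone u} :=
  isClosed_monotone.measurableSet

/-- The ordered integral as an integral over a full cube; negative values of `a` are allowed. -/
lemma integral_chamber_eq {n : ℕ} (a : ℝ) :
    ∫ u in Set.univ.pi fun _ : Fin n => Set.Icc a 1, symKer u =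
      n.factorial * ∫ u in (Set.univ.pi fun _ : Fin n => Set.Icc a 1) ∩ {u | Monotone u},
        (Matrix.vandermonde fun i => u i ^ 2).det := by
  have hBm : MeasurableSet (Set.univ.pi fun _ : Fin n => Set.Icc a (1 : ℝ)) :=
    MeasurableSet.univ_pi fun _ => measurableSet_Icc
  rw [integral_symm_eq symKer id measurable_id _ measurableSet_Icc (integrableOn_symKer a)
    symKer_perm]
  · congr 1
    rw [← integral_indicator (hBm.inter measurableSet_monotone),
      ← integral_indicator (hBm.inter (measurableSet_strictMono measurable_id))]
    refine integral_congr_ae (Filter.Eventually.of_forall fun u => ?_)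
    classical
    simp only [Set.indicator_apply, Set.mem_inter_iff, Set.mem_ofPred_eq, id]
    by_cases hB : u ∈ (Set.univ.pi fun _ : Fin n => Set.Icc a (1 : ℝ))
    swap
    · simp only [hB, false_and, if_false]
    by_cases hs : StrictMono fun i => u i
    · have hm : Monotone u := hs.monotone
      simp only [hB, hs, hm, and_self, if_true]
      rw [symKer_eq]
      have : 0 < (Matrix.vandermonde u).det := by
        rw [Matrix.det_vandermonde]
        refine Finset.prod_pos fun i _ => Finset.prod_pos fun j hj => ?_
        exact sub_pos.mpr (hs (Finset.mem_Ioi.mp hj))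
      rw [sign_pos this]; simp
    · simp only [hB, hs, and_false, if_false, true_and]
      split_ifs with hm
      · have hm' : Monotone u := hm
        have : ¬ Function.Injective u := fun hi => hs (hm'.strictMono_of_injective hi)
        symm
        by_contra h'
        have h2 := Matrix.det_vandermonde_ne_zero_iff.mp h'
        exact this fun i j hij => h2 (by simp only [hij])
      · rfl
  · intro u hu
    apply symKer_eq_zero
    intro hi
    exact hu fun i j hij => hi (by simp only [id] at hij; simp only [hij])

lemma sum_card_Ioi (n : ℕ) : ∑ i : Fin n, (Finset.Ioi i).card = n * (n - 1) / 2 := by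
  simp only [Fin.card_Ioi]
  rw [Fin.sum_univ_eq_sum_range (fun i => n - 1 - i), Finset.sum_range_reflect (fun i => i) n,
    Finset.sum_range_id]

lemma volume_cube_real {n : ℕ} (a : ℝ) (ha : a ≤ 1) :
    volume.real (Set.univ.pi fun _ : Fin n => Set.Icc a 1) = (1 - a) ^ n := by
  rw [Measure.real, Set.pi_univ_Icc, Real.volume_Icc_pi_toReal (fun _ => ha)]
  simp

lemma sq_diff_bound {a x y : ℝ} (ha : 0 ≤ a) (hx : x ∈ Set.Icc a 1) (hy : y ∈ Set.Icc a 1) :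
    |x ^ 2 - y ^ 2| ≤ 2 * (1 - a) := by
  obtain ⟨hx1, hx2⟩ := hx
  obtain ⟨hy1, hy2⟩ := hy
  rw [abs_le]
  constructor <;> nlinarith

/-- Every factor of the kernel is `O(1 - a)` and the cube has volume `(1 - a)^n`. -/
lemma bound_at_one {n : ℕ} (a : ℝ) (ha : 0 ≤ a) (ha1 : a < 1) :
    |∫ u in Set.univ.pi fun _ : Fin n => Set.Icc a 1, symKer u| ≤
      2 ^ (n * (n - 1) / 2) * (1 - a) ^ (n * (n - 1) / 2 + n) := by
  have hb : ∀ u ∈ Set.univ.pi fun _ : Fin n => Set.Icc a (1 : ℝ),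
      ‖symKer u‖ ≤ (2 * (1 - a)) ^ (n * (n - 1) / 2) := by
    intro u hu
    rw [Real.norm_eq_abs, abs_symKer, Matrix.det_vandermonde, Finset.abs_prod, ← sum_card_Ioi,
      ← Finset.prod_pow_eq_pow_sum]
    refine Finset.prod_le_prod (fun _ _ => abs_nonneg _) fun i _ => ?_
    rw [Finset.abs_prod]
    rw [← Finset.prod_const]
    refine Finset.prod_le_prod (fun _ _ => abs_nonneg _) fun j _ => ?_
    exact sq_diff_bound ha (hu j trivial) (hu i trivial)
  have := norm_setIntegral_le_of_norm_le_const
    ((isCompact_cube (n := n) a 1).measure_lt_top (μ := volume)) hb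
  rw [volume_cube_real a ha1.le, Real.norm_eq_abs] at this
  refine this.trans (le_of_eq ?_)
  rw [mul_pow, pow_add]; ring

/-! ### Cancellation near the endpoint -1 -/

/-- The reflection `u_k ↦ -u_k`. -/
def flipAt {n : ℕ} (k : Fin n) : (Fin n → ℝ) ≃ᵐ (Fin n → ℝ) where
  toFun u := fun i => if i = k then -u i else u i
  invFun u := fun i => if i = k then -u i else u i
  left_inv u := by ext i; by_cases h : i = k <;> simp [h]
  right_inv u := by ext i; by_cases h : i = k <;> simp [h]
  measurable_toFun := by
    refine measurable_pi_lambda _ fun i => ?_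
    change Measurable fun u : Fin n → ℝ => if i = k then -u i else u i
    split_ifs <;> fun_prop
  measurable_invFun := by
    refine measurable_pi_lambda _ fun i => ?_
    change Measurable fun u : Fin n → ℝ => if i = k then -u i else u i
    split_ifs <;> fun_prop

lemma flipAt_apply {n : ℕ} (k : Fin n) (u : Fin n → ℝ) (i : Fin n) :
    flipAt k u i = if i = k then -u i else u i := rfl

lemma flipAt_preserving {n : ℕ} (k : Fin n) : MeasurePreserving (flipAt k) volume volume := by
  have : MeasurePreserving (fun (u : Fin n → ℝ) i => (if i = k then (fun x : ℝ => -x) else id) (u i))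
      (Measure.pi fun _ => volume) (Measure.pi fun _ => volume) := by
    refine measurePreserving_pi _ _ fun i => ?_
    split_ifs
    · exact Measure.measurePreserving_neg _
    · exact MeasurePreserving.id _
  convert! this using 1
  ext u i
  rw [flipAt_apply]
  split_ifs <;> rfl

/-- If the coordinates are ordered by absolute value, the sign of `u_j - u_i` for `i < j` is that of
`u_j`, so each `u_j` contributes its sign once for every `i < j`. -/
lemma sign_det_of_abs {n : ℕ} (u : Fin n → ℝ) (hu : StrictMono fun i => |u i|) :
    SignType.sign (Matrix.vandermonde u).det = ∏ j : Fin n, SignType.sign (u j) ^ (j : ℕ) := by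
  have hs (i j : Fin n) (hij : i < j) : SignType.sign (u j - u i) = SignType.sign (u j) := by
    have h : |u i| < |u j| := hu hij
    rcases lt_trichotomy (u j) 0 with h0 | h0 | h0
    · rw [sign_neg h0, sign_neg]
      rw [abs_of_neg h0] at h
      have := neg_abs_le (u i)
      linarith
    · rw [h0, abs_zero] at h
      exact absurd h (not_lt.mpr (abs_nonneg _))
    · rw [sign_pos h0, sign_pos]
      rw [abs_of_pos h0] at h
      have := le_abs_self (u i)
      linarith
  rw [Matrix.det_vandermonde, show SignType.sign (∏ i : Fin n, ∏ j ∈ Finset.Ioi i, (u j - u i)) =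
    ∏ i : Fin n, ∏ j ∈ Finset.Ioi i, SignType.sign (u j - u i) by
      exact (map_prod (signHom (α := ℝ)) _ _).trans (Finset.prod_congr rfl fun i _ => map_prod (signHom (α := ℝ)) _ _)]
  have : ∏ i : Fin n, ∏ j ∈ Finset.Ioi i, SignType.sign (u j - u i) =
      ∏ i : Fin n, ∏ j ∈ Finset.Ioi i, SignType.sign (u j) :=
    Finset.prod_congr rfl fun i _ => Finset.prod_congr rfl fun j hj => hs i j (Finset.mem_Ioi.mp hj)
  rw [this, Finset.prod_comm' (t' := Finset.univ) (s' := fun j => Finset.Iio j) (by simp)]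
  simp

/-- With coordinates ordered by absolute value, the sign of `u_1` enters `symKer u` exactly once. -/
lemma symKer_flip {m : ℕ} (u : Fin (m + 2) → ℝ) (hu : StrictMono fun i => |u i|) :
    symKer (flipAt 1 u) = - symKer u := by
  have habs (i) : |flipAt 1 u i| = |u i| := by
    rw [flipAt_apply]; split_ifs <;> simp
  have hsq (i) : flipAt 1 u i ^ 2 = u i ^ 2 := by rw [← sq_abs, habs, sq_abs]
  rw [symKer_eq, symKer_eq, sign_det_of_abs u hu, sign_det_of_abs _ (by simpa only [habs] using hu)]
  simp only [hsq]
  rw [← neg_mul]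
  congr 1
  rw [← Finset.mul_prod_erase _ _ (Finset.mem_univ (1 : Fin (m + 2))),
    ← Finset.mul_prod_erase _ (fun j => SignType.sign (u j) ^ (j : ℕ))
      (Finset.mem_univ (1 : Fin (m + 2)))]
  have : ∏ x ∈ Finset.univ.erase (1 : Fin (m + 2)), SignType.sign (flipAt 1 u x) ^ (x : ℕ) =
      ∏ x ∈ Finset.univ.erase (1 : Fin (m + 2)), SignType.sign (u x) ^ (x : ℕ) := by
    refine Finset.prod_congr rfl fun x hx => ?_
    rw [flipAt_apply, if_neg (Finset.ne_of_mem_erase hx)]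
  rw [this, flipAt_apply, if_pos rfl]
  simp [Left.sign_neg]

/-- The factors involving `u_0` are at most `1`, the others are `O(1 - α)`. -/
lemma prod_Ioi_bound {m : ℕ} (α : ℝ) (hα : 0 ≤ α) (u : Fin (m + 1) → ℝ)
    (h0 : |u 0| ≤ 1) (h1 : ∀ i : Fin m, u i.succ ∈ Set.Icc α 1) :
    |symKer u| ≤ (2 * (1 - α)) ^ (m * (m - 1) / 2) := by
  rw [abs_symKer, Matrix.det_vandermonde, Fin.prod_univ_succ, abs_mul]
  have e1 : |∏ j ∈ Finset.Ioi (0 : Fin (m + 1)), (u j ^ 2 - u 0 ^ 2)| ≤ 1 := by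
    rw [Finset.abs_prod]
    refine Finset.prod_le_one (fun _ _ => abs_nonneg _) fun j hj => ?_
    obtain ⟨k, rfl⟩ := Fin.exists_succ_eq.mpr (Finset.mem_Ioi.mp hj).ne'
    obtain ⟨ha, hb⟩ := h1 k
    have := sq_abs (u 0)
    have h2 : u 0 ^ 2 ≤ 1 := by rw [← this]; exact pow_le_one₀ (abs_nonneg _) h0
    have h3 : u k.succ ^ 2 ≤ 1 := pow_le_one₀ (hα.trans ha) hb
    rw [abs_le]
    constructor <;> nlinarith [sq_nonneg (u 0), sq_nonneg (u k.succ)]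
  have e2 : |∏ i : Fin m, ∏ j ∈ Finset.Ioi i.succ, (u j ^ 2 - u i.succ ^ 2)| ≤
      (2 * (1 - α)) ^ (m * (m - 1) / 2) := by
    rw [Finset.abs_prod, ← sum_card_Ioi, ← Finset.prod_pow_eq_pow_sum]
    refine Finset.prod_le_prod (fun _ _ => abs_nonneg _) fun i _ => ?_
    have hc : (Finset.Ioi i.succ).card = (Finset.Ioi i).card := by
      simp only [Fin.card_Ioi, Fin.val_succ]; omega
    rw [Finset.abs_prod, ← hc, ← Finset.prod_const]
    refine Finset.prod_le_prod (fun _ _ => abs_nonneg _) fun j hj => ?_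
    obtain ⟨k, rfl⟩ := Fin.exists_succ_eq.mpr
      ((Fin.succ_pos i).trans (Finset.mem_Ioi.mp hj)).ne'
    exact sq_diff_bound hα (h1 k) (h1 i)
  calc _ ≤ 1 * (2 * (1 - α)) ^ (m * (m - 1) / 2) := by
        exact mul_le_mul e1 e2 (abs_nonneg _) zero_le_one
    _ = _ := one_mul _

/-- The integral over the cube `[-α, 1]^n` tends to zero as `α → 1` although the cube does not
shrink. In the chamber `|u_0| < |u_1| < ⋯` the part with `|u_1| ≤ α` is stable under `u_1 ↦ -u_1`
and cancels; on the rest all coordinates but `u_0` lie in `[α, 1]`. -/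
lemma bound_at_neg_one {m : ℕ} (α : ℝ) (hα : 0 ≤ α) (hα1 : α < 1) :
    |∫ u in Set.univ.pi fun _ : Fin (m + 2) => Set.Icc (-α) 1, symKer u| ≤
      ((m + 2).factorial * 2 ^ ((m + 1) * m / 2 + 1)) * (1 - α) ^ ((m + 2) * (m + 1) / 2) := by
  set B : Set (Fin (m + 2) → ℝ) := Set.univ.pi fun _ => Set.Icc (-α) 1 with hB
  set M : Set (Fin (m + 2) → ℝ) := {u | StrictMono fun i => |u i|} with hM
  have hBm : MeasurableSet B := MeasurableSet.univ_pi fun _ => measurableSet_Icc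
  have hMm : MeasurableSet M := measurableSet_strictMono continuous_abs.measurable
  set L : Set (Fin (m + 2) → ℝ) := {u | |u 1| ≤ α} with hL
  have hLm : MeasurableSet L :=
    measurableSet_le (measurable_pi_apply 1).abs measurable_const
  rw [integral_symm_eq symKer (fun x => |x|) continuous_abs.measurable _ measurableSet_Icc
    (integrableOn_symKer (-α)) symKer_perm (by
      intro u hu
      apply symKer_eq_zero
      intro hi
      exact hu fun i j hij => hi (by simpa using (sq_eq_sq_iff_abs_eq_abs _ _).mpr hij))]
  have hInt : IntegrableOn (symKer (n := m + 2)) (B ∩ M) :=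
    (integrableOn_symKer (-α)).mono_set Set.inter_subset_left
  rw [← integral_inter_add_sdiff hLm hInt]
  have hz : ∫ u in B ∩ M ∩ L, symKer u = 0 := by
    have habs (u : Fin (m + 2) → ℝ) (i) : |flipAt 1 u i| = |u i| := by
      rw [flipAt_apply]; split_ifs <;> simp
    have hpre' : ∀ u ∈ B ∩ M ∩ L, flipAt 1 u ∈ B ∩ M ∩ L := by
      rintro u ⟨⟨hu1, hu2⟩, hu3⟩
      refine ⟨⟨?_, ?_⟩, ?_⟩
      · intro i _
        rw [flipAt_apply]
        have hui := hu1 i trivial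
        split_ifs with hi
        · subst hi
          have h3 : |u 1| ≤ α := hu3
          rw [abs_le] at h3
          exact ⟨by linarith [h3.2], by linarith [h3.1]⟩
        · exact hui
      · show StrictMono fun i => |flipAt 1 u i|
        simp only [habs]
        exact hu2
      · show |flipAt 1 u 1| ≤ α
        rw [habs]; exact hu3
    have hinv (u : Fin (m + 2) → ℝ) : flipAt 1 (flipAt 1 u) = u := (flipAt 1).symm_apply_apply u
    have hpre : flipAt 1 ⁻¹' (B ∩ M ∩ L) = B ∩ M ∩ L := by
      ext u
      refine ⟨fun h => ?_, hpre' u⟩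
      have := hpre' _ h
      rwa [hinv] at this
    have key := (flipAt_preserving (1 : Fin (m + 2))).setIntegral_preimage_emb
      (flipAt 1).measurableEmbedding symKer (B ∩ M ∩ L)
    rw [hpre, setIntegral_congr_fun ((hBm.inter hMm).inter hLm)
      (fun u hu => symKer_flip u hu.1.2), integral_neg] at key
    linarith
  rw [hz, zero_add, abs_mul, Nat.abs_cast]
  -- `Z` contains the part `|u 1| > α` of the chamber, where nothing cancels.
  set Z : Set (Fin (m + 2) → ℝ) := Set.univ.pi (Fin.cons (Set.Icc (-1) 1) fun _ => Set.Icc α 1)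
    with hZ
  have hsub : (B ∩ M) \ L ⊆ Z := by
    rintro u ⟨⟨hu1, hu2⟩, hu3⟩ i _
    have hu3' : α < |u 1| := lt_of_not_ge hu3
    refine Fin.cases ?_ (fun k => ?_) i
    · have := hu1 0 trivial
      exact ⟨by simpa using (by linarith [this.1] : -1 ≤ u 0), this.2⟩
    · have hk := hu1 k.succ trivial
      have h1k : |u 1| ≤ |u k.succ| := by
        apply hu2.monotone
        rw [Fin.le_def, Fin.val_succ]
        simp
      refine ⟨?_, hk.2⟩
      by_contra! hlt
      have : |u k.succ| ≤ α := abs_le.mpr ⟨hk.1, hlt.le⟩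
      linarith
  have hb : ∀ u ∈ (B ∩ M) \ L, ‖symKer u‖ ≤ (2 * (1 - α)) ^ ((m + 1) * m / 2) := by
    intro u hu
    have hu' := hsub hu
    have h0 : u 0 ∈ Set.Icc (-1 : ℝ) 1 := hu' 0 trivial
    exact prod_Ioi_bound α hα u (abs_le.mpr h0) fun i => hu' i.succ trivial
  have hZv : volume Z = ENNReal.ofReal (2 * (1 - α) ^ (m + 1)) := by
    rw [hZ, volume_pi_pi, Fin.prod_univ_succ]
    simp only [Fin.cons_zero, Fin.cons_succ, Real.volume_Icc, Finset.prod_const, Finset.card_univ,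
      Fintype.card_fin]
    rw [← ENNReal.ofReal_pow (by linarith), ← ENNReal.ofReal_mul (by norm_num)]
    norm_num
  have hfin : volume ((B ∩ M) \ L) < ⊤ :=
    (measure_mono hsub).trans_lt (by rw [hZv]; exact ENNReal.ofReal_lt_top)
  have hv : volume.real ((B ∩ M) \ L) ≤ 2 * (1 - α) ^ (m + 1) := by
    refine ENNReal.toReal_le_of_le_ofReal (by have : 0 < 1 - α := by linarith
                                              positivity) ?_
    rw [← hZv]; exact measure_mono hsub
  have := norm_setIntegral_le_of_norm_le_const hfin hb
  rw [Real.norm_eq_abs] at this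
  have hpos : 0 < 1 - α := by linarith
  have hexp : (m + 2) * (m + 1) / 2 = (m + 1) * m / 2 + (m + 1) := by
    rw [show (m + 2) * (m + 1) = (m + 1) * m + (m + 1) * 2 by ring,
      Nat.add_mul_div_right _ _ (by norm_num)]
  calc _ ≤ ((m + 2).factorial : ℝ) *
        ((2 * (1 - α)) ^ ((m + 1) * m / 2) * (2 * (1 - α) ^ (m + 1))) := by
        gcongr
        exact this.trans (by gcongr)
    _ = _ := by rw [hexp, mul_pow, pow_add, pow_add]; ring

/-! ### The integral of the Vandermonde determinant over the ordered cube -/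

/-- The ordered cube `{a ≤ u₀ ≤ ⋯ ≤ u_{n-1} ≤ 1}`. -/
def ordCube (n : ℕ) (a : ℝ) : Set (Fin n → ℝ) :=
  (Set.univ.pi fun _ : Fin n => Set.Icc a 1) ∩ {u | Monotone u}

lemma isCompact_ordCube (n : ℕ) (a : ℝ) : IsCompact (ordCube n a) :=
  (isCompact_cube a 1).inter_right isClosed_monotone

lemma cons_mem_ordCube {n : ℕ} (a x : ℝ) (v : Fin n → ℝ) :
    (Fin.cons x v : Fin (n + 1) → ℝ) ∈ ordCube (n + 1) a ↔ x ∈ Set.Icc a 1 ∧ v ∈ ordCube n x := by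
  constructor
  · rintro ⟨h1, h2⟩
    have h2' : Monotone (Fin.cons x v : Fin (n + 1) → ℝ) := h2
    have h0 : x ∈ Set.Icc a 1 := h1 0 trivial
    refine ⟨h0, fun i _ => ⟨?_, (h1 i.succ trivial).2⟩, fun i j hij => ?_⟩
    · simpa using h2' (Fin.zero_le i.succ)
    · simpa using h2' (Fin.succ_le_succ_iff.mpr hij)
  · rintro ⟨h0, h1, h2⟩
    have h2' : Monotone v := h2
    refine ⟨fun i _ => ?_, fun i j => ?_⟩
    · refine Fin.cases ?_ (fun k => ?_) i
      · exact h0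
      · exact ⟨h0.1.trans (h1 k trivial).1, (h1 k trivial).2⟩
    · refine Fin.cases (fun _ => ?_) (fun k => ?_) i
      · refine Fin.cases ?_ (fun k => ?_) j
        · exact le_rfl
        · simpa using (h1 k trivial).1
      · refine Fin.cases (fun h => ?_) (fun l h => ?_) j
        · exact absurd h (not_le.mpr (Fin.succ_pos k))
        · simpa using h2' (Fin.succ_le_succ_iff.mp h)

open Polynomial in
lemma exists_antideriv (p : ℝ[X]) :
    ∃ S : ℝ[X], S.natDegree ≤ p.natDegree + 1 ∧ derivative S = p := by
  refine ⟨∑ i ∈ Finset.range (p.natDegree + 1), monomial (i + 1) (p.coeff i / (i + 1)), ?_, ?_⟩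
  · refine natDegree_sum_le_of_forall_le _ _ fun i hi => ?_
    refine (natDegree_monomial_le _).trans ?_
    have := Finset.mem_range.mp hi
    omega
  · rw [derivative_sum]
    conv_rhs => rw [p.as_sum_range]
    refine Finset.sum_congr rfl fun i _ => ?_
    rw [derivative_monomial]
    congr 1
    have : ((i : ℝ) + 1) ≠ 0 := by positivity
    push_cast
    field_simp

open Polynomial in
/-- The integral of a monomial over the ordered cube is a polynomial in the lower endpoint; each of
the `n` integrations raises the degree by one. -/
lemma exists_poly_monomial (n : ℕ) (m : Fin n → ℕ) :
    ∃ Q : ℝ[X], Q.natDegree ≤ ∑ i, m i + n ∧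
      ∀ a : ℝ, a ≤ 1 → ∫ u in ordCube n a, ∏ i, u i ^ m i = Q.eval a := by
  induction n with
  | zero =>
    refine ⟨1, by simp, fun a _ => ?_⟩
    have : ordCube 0 a = Set.univ := by
      ext u; simp [ordCube, Subsingleton.monotone]
    rw [this]
    have hv : (volume : Measure (Fin 0 → ℝ)) Set.univ = 1 := by
      rw [volume_pi, Measure.pi_of_empty (x := fun i => i.elim0)]
      simp
    simp [Measure.real, hv]
  | succ n ih =>
    obtain ⟨Q, hQ, hQe⟩ := ih fun i => m i.succ
    obtain ⟨S, hS, hSd⟩ := exists_antideriv (X ^ m 0 * Q)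
    refine ⟨Polynomial.C (S.eval 1) - S, ?_, fun a ha => ?_⟩
    · refine (natDegree_sub_le _ _).trans (max_le (by simp) (hS.trans ?_))
      have := natDegree_mul_le (p := X ^ m 0) (q := Q)
      rw [natDegree_X_pow] at this
      rw [Fin.sum_univ_succ]
      omega
    set e := (MeasurableEquiv.piFinSuccAbove (fun _ : Fin (n + 1) => ℝ) 0).symm with he
    have hee (z : ℝ × (Fin n → ℝ)) : e z = Fin.cons z.1 z.2 := by
      simp only [e, MeasurableEquiv.piFinSuccAbove]
      exact Fin.insertNth_zero' _ _
    have hep : MeasurePreserving e volume volume :=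
      (volume_preserving_piFinSuccAbove (fun _ : Fin (n + 1) => ℝ) 0).symm
    set F : (Fin (n + 1) → ℝ) → ℝ := (ordCube (n + 1) a).indicator fun u => ∏ i, u i ^ m i with hF
    have hFi : Integrable F := by
      refine IntegrableOn.integrable_indicator ?_ (isCompact_ordCube _ _).measurableSet
      have : Continuous fun u : Fin (n + 1) → ℝ => ∏ i, u i ^ m i := by fun_prop
      exact this.continuousOn.integrableOn_compact (isCompact_ordCube _ _)
    have hFe : Integrable (fun z => F (e z)) :=
      (hep.integrable_comp_emb e.measurableEmbedding).mpr hFi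
    rw [← integral_indicator (isCompact_ordCube _ _).measurableSet, ← hF, ← hep.integral_comp' F]
    rw [Measure.volume_eq_prod, integral_prod _ hFe]
    have hinner (x : ℝ) : ∫ v, F (e (x, v)) =
        (Set.Icc a 1).indicator (fun x => (X ^ m 0 * Q).eval x) x := by
      classical
      by_cases hx : x ∈ Set.Icc a 1
      · rw [Set.indicator_of_mem hx, eval_mul, ← hQe x hx.2, eval_pow, eval_X,
          ← integral_indicator (isCompact_ordCube _ _).measurableSet, ← integral_const_mul]
        congr 1
        ext v
        rw [hee, hF]
        simp only [Set.indicator_apply, cons_mem_ordCube, hx, true_and]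
        split_ifs
        · rw [Fin.prod_univ_succ]; simp
        · simp
      · rw [Set.indicator_of_notMem hx]
        refine integral_eq_zero_of_ae (Filter.Eventually.of_forall fun v => ?_)
        beta_reduce
        rw [hee, hF]
        simp only [Set.indicator_apply, cons_mem_ordCube, hx, false_and, if_false, Pi.zero_apply]
    simp_rw [hinner]
    rw [integral_indicator measurableSet_Icc, integral_Icc_eq_integral_Ioc,
      ← intervalIntegral.integral_of_le ha,
      intervalIntegral.integral_eq_sub_of_hasDerivAt (f := fun x => S.eval x)]
    · simp
    · intro x _
      rw [← hSd]
      exact S.hasDerivAt x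
    · exact (X ^ m 0 * Q).continuous.intervalIntegrable _ _

open Polynomial in
lemma exists_poly_vandermonde (n : ℕ) :
    ∃ Q : ℝ[X], Q.natDegree ≤ n * (n - 1) + n ∧
      ∀ a : ℝ, a ≤ 1 → ∫ u in ordCube n a, (Matrix.vandermonde fun i => u i ^ 2).det = Q.eval a := by
  choose Q hQ hQe using fun σ : Equiv.Perm (Fin n) =>
    exists_poly_monomial n fun i => 2 * (σ.symm i : ℕ)
  refine ⟨∑ σ : Equiv.Perm (Fin n), ((Equiv.Perm.sign σ : ℤ) : ℝ[X]) * Q σ, ?_, fun a ha => ?_⟩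
  · refine natDegree_sum_le_of_forall_le _ _ fun σ _ => ?_
    refine natDegree_mul_le.trans ?_
    rw [natDegree_intCast, zero_add]
    refine (hQ σ).trans (le_of_eq ?_)
    congr 1
    rw [← Finset.mul_sum, Equiv.sum_comp σ.symm (fun i : Fin n => (i : ℕ)),
      Fin.sum_univ_eq_sum_range (fun i => i) n, mul_comm, Finset.sum_range_id_mul_two]
  · simp only [Matrix.det_apply', Matrix.vandermonde_apply]
    rw [integral_finsetSum]
    · rw [eval_finsetSum]
      refine Finset.sum_congr rfl fun σ _ => ?_
      rw [integral_const_mul, eval_mul, ← hQe σ a ha]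
      simp only [eval_intCast]
      congr 2
      ext u
      rw [← Equiv.prod_comp σ (fun i => u i ^ (2 * (σ.symm i : ℕ)))]
      simp [pow_mul]
    · intro σ _
      have : Continuous fun u : Fin n → ℝ =>
          ((Equiv.Perm.sign σ : ℤ) : ℝ) * ∏ i, (u (σ i) ^ 2) ^ (i : ℕ) := by fun_prop
      exact this.continuousOn.integrableOn_compact (isCompact_ordCube _ _)

/-- The integral of `∏_{i<j} (u_j² - u_i²)` over `{a ≤ u_0 ≤ ⋯ ≤ u_m ≤ 1}`, up to a constant: it is
a polynomial in `a` of degree at most `(m+1)²`, and its orders of vanishing at `±1` exhaust that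
degree. -/
lemma integral_ordCube (m : ℕ) :
    ∃ κ : ℝ, ∀ a : ℝ, a ≤ 1 →
      ∫ u in ordCube (m + 1) a, (Matrix.vandermonde fun i => u i ^ 2).det =
        κ * ((1 - a) ^ ((m + 1) * m / 2 + (m + 1)) * (1 + a) ^ ((m + 1) * m / 2)) := by
  obtain ⟨Q, hQ, hQe⟩ := exists_poly_vandermonde (m + 1)
  have hcube (a : ℝ) (ha : a ≤ 1) : Q.eval a = ((m + 1).factorial : ℝ)⁻¹ *
      ∫ u in Set.univ.pi fun _ : Fin (m + 1) => Set.Icc a 1, symKer u := by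
    rw [integral_chamber_eq, ← hQe a ha, inv_mul_cancel_left₀ (by positivity)]
    rfl
  have hf : (0 : ℝ) ≤ ((m + 1).factorial : ℝ)⁻¹ := by positivity
  obtain ⟨C₂, hC₂⟩ : ∃ C : ℝ, ∀ a : ℝ, 0 ≤ a → a < 1 →
      |∫ u in Set.univ.pi fun _ : Fin (m + 1) => Set.Icc (-a) 1, symKer u| ≤
        C * (1 - a) ^ ((m + 1) * m / 2) := by
    rcases m with _ | m
    -- For a single variable no vanishing at `-1` is claimed; the integral is merely bounded.
    · refine ⟨2, fun a ha ha1 => ?_⟩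
      have := norm_setIntegral_le_of_norm_le_const
        ((isCompact_cube (n := 0 + 1) (-a) 1).measure_lt_top (μ := volume)) (f := symKer) (C := 1)
        (fun u _ => by simp [symKer])
      rw [volume_cube_real _ (by linarith), Real.norm_eq_abs] at this
      simp only [zero_add, pow_one] at this ⊢
      refine this.trans ?_
      norm_num
      linarith
    · exact ⟨_, fun a ha ha1 => bound_at_neg_one a ha ha1⟩
  obtain ⟨κ, hκ⟩ := poly_eq_of_bounds Q ((m + 1) * m / 2 + (m + 1)) ((m + 1) * m / 2) (by
      refine hQ.trans ?_
      simp only [Nat.add_sub_cancel]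
      have : 2 ∣ (m + 1) * m := by rw [mul_comm]; exact (Nat.even_mul_succ_self m).two_dvd
      omega)
    (((m + 1).factorial : ℝ)⁻¹ * 2 ^ ((m + 1) * m / 2)) (((m + 1).factorial : ℝ)⁻¹ * C₂)
    (fun a ha ha1 => by
      rw [hcube a ha1.le, abs_mul, abs_of_nonneg hf, mul_assoc]
      exact mul_le_mul_of_nonneg_left (bound_at_one a ha ha1) hf)
    (fun a ha ha1 => by
      rw [hcube (-a) (by linarith), abs_mul, abs_of_nonneg hf, mul_assoc]
      exact mul_le_mul_of_nonneg_left (hC₂ a ha ha1) hf)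
  exact ⟨κ, fun a ha => by rw [hQe a ha, hκ]⟩

/-! ### Staircases and Gelfand–Tsetlin patterns -/

/-- The positions on and above the main diagonal of an `n × n` square, with the order induced from
the product order. -/
abbrev Stair (n : ℕ) : Type := {p : Fin n × Fin n // p.1 ≤ p.2}

/-- A staircase consists of its main diagonal and a smaller staircase, embedded by
`(i, j) ↦ (i, j + 1)`. -/
noncomputable def stairEquiv (n : ℕ) : Fin (n + 1) ⊕ Stair n ≃ Stair (n + 1) :=
  Equiv.ofBijective
    (Sum.elim (fun i => ⟨(i, i), le_rfl⟩)
      (fun p => ⟨(p.1.1.castSucc, p.1.2.succ), by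
        have := p.2; rw [Fin.le_def] at this ⊢; simp; omega⟩))
    (by
      constructor
      · rintro (i | ⟨⟨a, b⟩, h⟩) (j | ⟨⟨c, d⟩, h'⟩) hij <;>
          simp only [Sum.elim_inl, Sum.elim_inr, Subtype.mk.injEq, Prod.mk.injEq, Fin.ext_iff,
            Fin.val_castSucc, Fin.val_succ, Sum.inl.injEq, Sum.inr.injEq] at hij ⊢
        · exact hij.1
        · simp only [Fin.le_def] at h'; omega
        · simp only [Fin.le_def] at h; omega
        · omega
      · rintro ⟨⟨a, b⟩, h⟩
        simp only [Fin.le_def] at h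
        rcases eq_or_lt_of_le h with h | h
        · exact ⟨Sum.inl a, by simp [Fin.ext_iff, h]⟩
        · refine ⟨Sum.inr ⟨(⟨a, by omega⟩, ⟨b - 1, by omega⟩), by
            simp only [Fin.le_def]; omega⟩, ?_⟩
          simp only [Sum.elim_inr, Subtype.mk.injEq, Prod.mk.injEq, Fin.ext_iff, Fin.val_castSucc,
            Fin.val_succ, true_and]
          omega)

/-- The position `(i, i)`. -/
def diagPos {n : ℕ} (i : Fin n) : Stair n := ⟨(i, i), le_rfl⟩

/-- The embedding `(i, j) ↦ (i, j + 1)` of the staircase as the positions off the diagonal. -/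
def offPos {n : ℕ} (p : Stair n) : Stair (n + 1) := ⟨(p.1.1.castSucc, p.1.2.succ), by
  have := p.2; rw [Fin.le_def] at this ⊢; simp; omega⟩

lemma stairEquiv_inl {n : ℕ} (i : Fin (n + 1)) : stairEquiv n (Sum.inl i) = diagPos i := rfl

lemma stairEquiv_inr {n : ℕ} (p : Stair n) : stairEquiv n (Sum.inr p) = offPos p := rfl

lemma stair_cases {n : ℕ} (p : Stair (n + 1)) : (∃ i, p = diagPos i) ∨ ∃ q, p = offPos q := by
  obtain ⟨x, rfl⟩ := (stairEquiv n).surjective p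
  rcases x with i | q
  · exact Or.inl ⟨i, rfl⟩
  · exact Or.inr ⟨q, rfl⟩

lemma sum_stair {n : ℕ} (f : Stair (n + 1) → ℝ) :
    ∑ p, f p = ∑ i, f (diagPos i) + ∑ q, f (offPos q) := by
  rw [← Equiv.sum_comp (stairEquiv n), Fintype.sum_sum_type]
  rfl

/-- The filling of a staircase with diagonal `l` and off-diagonal part `y`. -/
noncomputable def glue (n : ℕ) :
    (Fin (n + 1) → ℝ) × (Stair n → ℝ) ≃ᵐ (Stair (n + 1) → ℝ) :=
  (MeasurableEquiv.sumPiEquivProdPi fun _ => ℝ).symm.trans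
    (MeasurableEquiv.piCongrLeft (fun _ => ℝ) (stairEquiv n))

lemma glue_preserving (n : ℕ) : MeasurePreserving (glue n) volume volume :=
  (volume_measurePreserving_sumPiEquivProdPi_symm (fun _ : Fin (n + 1) ⊕ Stair n => ℝ)).trans
    (volume_measurePreserving_piCongrLeft (fun _ => ℝ) (stairEquiv n))

lemma glue_diag {n : ℕ} (l : Fin (n + 1) → ℝ) (y : Stair n → ℝ) (i : Fin (n + 1)) :
    glue n (l, y) (diagPos i) = l i := by
  rw [← stairEquiv_inl]
  simp only [glue, MeasurableEquiv.trans_apply, MeasurableEquiv.coe_piCongrLeft]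
  rw [Equiv.piCongrLeft_apply_apply]
  rfl

lemma glue_off {n : ℕ} (l : Fin (n + 1) → ℝ) (y : Stair n → ℝ) (q : Stair n) :
    glue n (l, y) (offPos q) = y q := by
  rw [← stairEquiv_inr]
  simp only [glue, MeasurableEquiv.trans_apply, MeasurableEquiv.coe_piCongrLeft]
  rw [Equiv.piCongrLeft_apply_apply]
  rfl

lemma diag_le_diag {n : ℕ} {i j : Fin n} : diagPos i ≤ diagPos j ↔ i ≤ j := by
  simp [diagPos]

lemma off_le_off {n : ℕ} {p q : Stair n} : offPos p ≤ offPos q ↔ p ≤ q := by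
  rw [← Subtype.coe_le_coe, ← Subtype.coe_le_coe, Prod.le_def, Prod.le_def]
  simp [offPos]

lemma diag_le_off {n : ℕ} {i : Fin (n + 1)} {q : Stair n} :
    diagPos i ≤ offPos q ↔ (i : ℕ) ≤ q.1.1 := by
  have := q.2
  rw [← Subtype.coe_le_coe, Prod.le_def]
  simp only [diagPos, offPos, Fin.le_def, Fin.val_castSucc, Fin.val_succ] at this ⊢
  omega

lemma off_le_diag {n : ℕ} {i : Fin (n + 1)} {q : Stair n} :
    offPos q ≤ diagPos i ↔ (q.1.2 : ℕ) + 1 ≤ i := by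
  have := q.2
  rw [← Subtype.coe_le_coe, Prod.le_def]
  simp only [diagPos, offPos, Fin.le_def, Fin.val_castSucc, Fin.val_succ] at this ⊢
  omega

/-- A filling is weakly decreasing iff its diagonal and its off-diagonal part are, and the two
outermost diagonals interlace. -/
lemma antitone_glue {n : ℕ} (l : Fin (n + 1) → ℝ) (y : Stair n → ℝ) :
    Antitone (glue n (l, y)) ↔
      Antitone l ∧ Antitone y ∧ ∀ i : Fin n, y (diagPos i) ∈ Set.Icc (l i.succ) (l i.castSucc) := by
  constructor
  · intro h
    refine ⟨fun i j hij => ?_, fun p q hpq => ?_, fun i => ⟨?_, ?_⟩⟩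
    · simpa [glue_diag] using h (diag_le_diag.mpr hij)
    · simpa [glue_off] using h (off_le_off.mpr hpq)
    · have : offPos (diagPos i) ≤ diagPos i.succ := off_le_diag.mpr (by simp [diagPos])
      simpa [glue_diag, glue_off] using h this
    · have : diagPos i.castSucc ≤ offPos (diagPos i) := diag_le_off.mpr (by simp [diagPos])
      simpa [glue_diag, glue_off] using h this
  · rintro ⟨hl, hy, hi⟩ p q hpq
    rcases stair_cases p with ⟨i, rfl⟩ | ⟨p, rfl⟩ <;> rcases stair_cases q with ⟨j, rfl⟩ | ⟨q, rfl⟩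
    · rw [glue_diag, glue_diag]; exact hl (diag_le_diag.mp hpq)
    · rw [glue_diag, glue_off]
      have h1 := diag_le_off.mp hpq
      have h2 : y q ≤ y (diagPos q.1.1) := hy (show diagPos q.1.1 ≤ q from ⟨le_rfl, q.2⟩)
      exact h2.trans ((hi _).2.trans (hl h1))
    · rw [glue_diag, glue_off]
      have h1 := off_le_diag.mp hpq
      have h2 : y (diagPos p.1.2) ≤ y p := hy (show p ≤ diagPos p.1.2 from ⟨p.2, le_rfl⟩)
      refine le_trans (hl ?_) ((hi _).1.trans h2)
      rw [Fin.le_def, Fin.val_succ]; exact h1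
    · rw [glue_off, glue_off]; exact hy (off_le_off.mp hpq)

/-- The off-diagonal parts of the weakly decreasing fillings with diagonal `l`, that is, the
Gelfand–Tsetlin patterns with top row `l`. -/
def patterns {n : ℕ} (l : Fin (n + 1) → ℝ) : Set (Stair n → ℝ) := {y | Antitone (glue n (l, y))}

lemma continuous_glue_right {n : ℕ} (l : Fin (n + 1) → ℝ) :
    Continuous fun y : Stair n → ℝ => glue n (l, y) := by
  refine continuous_pi fun p => ?_
  rcases stair_cases p with ⟨i, rfl⟩ | ⟨p, rfl⟩
  · simp only [glue_diag]; fun_prop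
  · simp only [glue_off]; fun_prop

lemma isCompact_patterns {n : ℕ} (l : Fin (n + 1) → ℝ) : IsCompact (patterns l) := by
  refine (isCompact_univ_pi fun _ : Stair n => isCompact_Icc (a := l (Fin.last n)) (b := l 0)).of_isClosed_subset
    (isClosed_antitone.preimage (continuous_glue_right l)) ?_
  intro y hy p _
  have h : Antitone (glue n (l, y)) := hy
  constructor
  · have : offPos p ≤ diagPos (Fin.last n) := off_le_diag.mpr (by simp)
    simpa [glue_diag, glue_off] using h this
  · have : diagPos 0 ≤ offPos p := diag_le_off.mpr (by simp)
    simpa [glue_diag, glue_off] using h this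

/-- Fubini: integrate over the off-diagonal entries first, and then over the diagonal. -/
lemma integral_glue {n : ℕ} (D : Set (Stair (n + 1) → ℝ)) (hD : IsCompact D)
    (A : Set (Fin (n + 1) → ℝ)) (hA : MeasurableSet A)
    (hDA : ∀ l y, glue n (l, y) ∈ D ↔ l ∈ A ∧ y ∈ patterns l)
    (F : (Stair (n + 1) → ℝ) → ℝ) (hF : Continuous F) :
    ∫ x in D, F x = ∫ l in A, ∫ y in patterns l, F (glue n (l, y)) := by
  classical
  have hFi : Integrable (D.indicator F) :=
    (hF.continuousOn.integrableOn_compact hD).integrable_indicator hD.measurableSet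
  have hFe : Integrable (fun z => D.indicator F (glue n z)) :=
    ((glue_preserving n).integrable_comp_emb (glue n).measurableEmbedding).mpr hFi
  rw [← integral_indicator hD.measurableSet, ← (glue_preserving n).integral_comp' (D.indicator F),
    Measure.volume_eq_prod, integral_prod _ hFe, ← integral_indicator hA]
  congr 1
  ext l
  by_cases hl : l ∈ A
  · rw [Set.indicator_of_mem hl, ← integral_indicator (isCompact_patterns l).measurableSet]
    congr 1
    ext y
    simp only [Set.indicator_apply, hDA, hl, true_and]
  · rw [Set.indicator_of_notMem hl]
    refine integral_eq_zero_of_ae (Filter.Eventually.of_forall fun v => ?_)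
    simp only [Set.indicator_apply, hDA, hl, false_and, if_false, Pi.zero_apply]

/-- A determinant whose `i`-th row depends only on `μ i` can be integrated over a box row by row. -/
lemma integral_det_box {n : ℕ} (f : Fin n → ℝ → ℝ) (hf : ∀ j, Continuous (f j)) (a b : Fin n → ℝ) :
    ∫ μ in Set.univ.pi fun i => Set.Icc (a i) (b i), (Matrix.of fun i j => f j (μ i)).det =
      (Matrix.of fun i j => ∫ x in Set.Icc (a i) (b i), f j x).det := by
  simp only [Matrix.det_apply', Matrix.of_apply]
  rw [integral_finsetSum]
  · refine Finset.sum_congr rfl fun σ _ => ?_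
    rw [integral_const_mul]
    congr 1
    rw [← Equiv.prod_comp σ.symm]
    simp only [Equiv.apply_symm_apply]
    rw [volume_pi, Measure.restrict_pi_pi,
      ← integral_fintype_prod_eq_prod (fun i x => f (σ.symm i) x)]
    congr 1
    ext μ
    rw [← Equiv.prod_comp σ.symm]
    simp only [Equiv.apply_symm_apply]
  · intro σ _
    have : Continuous fun u : Fin n → ℝ =>
        ((Equiv.Perm.sign σ : ℤ) : ℝ) * ∏ i, f i (u (σ i)) := by fun_prop
    exact this.continuousOn.integrableOn_compact (isCompact_univ_pi fun _ => isCompact_Icc)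

/-- Subtracting from each row its predecessor and expanding along the first column. -/
lemma det_vandermonde_diff {n : ℕ} (w : Fin (n + 1) → ℝ) :
    (Matrix.vandermonde w).det =
      (Matrix.of fun i j : Fin n => w i.succ ^ ((j : ℕ) + 1) - w i.castSucc ^ ((j : ℕ) + 1)).det := by
  rw [Matrix.det_eq_of_forall_row_eq_smul_add_pred (A := Matrix.vandermonde w)
    (B := Matrix.of (Fin.cons (fun j => w 0 ^ (j : ℕ))
      fun i j => w i.succ ^ (j : ℕ) - w i.castSucc ^ (j : ℕ))) (fun _ => 1)]
  · rw [Matrix.det_succ_column_zero, Fin.sum_univ_succ, Finset.sum_eq_zero]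
    · simp [Matrix.submatrix]
    · intro i _; simp
  · intro j; simp [Matrix.vandermonde_apply]
  · intro i j; simp [Matrix.vandermonde_apply]

lemma integral_exp_Icc (c : ℝ) (hc : c ≠ 0) (a b : ℝ) (hab : a ≤ b) :
    ∫ x in Set.Icc a b, Real.exp (-(c * x)) = (Real.exp (-(c * a)) - Real.exp (-(c * b))) / c := by
  rw [integral_Icc_eq_integral_Ioc, ← intervalIntegral.integral_of_le hab,
    intervalIntegral.integral_eq_sub_of_hasDerivAt (f := fun x => -(Real.exp (-(c * x)) / c))]
  · ring
  · intro x _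
    have := (((hasDerivAt_id x).const_mul c).neg.exp.div_const c).neg
    convert! this using 1
    field_simp
    simp
  · exact (by fun_prop : Continuous fun x : ℝ => Real.exp (-(c * x))).intervalIntegrable _ _

/-- One step of the recursion: integrating over the diagonals `μ` interlacing `l` turns the
Vandermonde determinant of `μ` into that of `l`. -/
lemma integral_box_vandermonde {n : ℕ} (s : ℝ) (hs : 0 < s) (l : Fin (n + 2) → ℝ) (hl : Antitone l) :
    ∫ μ in Set.univ.pi fun i : Fin (n + 1) => Set.Icc (l i.succ) (l i.castSucc),
      Real.exp (-(2 * s * ∑ i, μ i)) * (Matrix.vandermonde fun i => Real.exp (-(2 * s * μ i))).det =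
    (∏ j : Fin (n + 1), (2 * ((j : ℝ) + 1))⁻¹) / s ^ (n + 1) *
      (Matrix.vandermonde fun i => Real.exp (-(2 * s * l i))).det := by
  have h1 (μ : Fin (n + 1) → ℝ) :
      Real.exp (-(2 * s * ∑ i, μ i)) * (Matrix.vandermonde fun i => Real.exp (-(2 * s * μ i))).det =
      (Matrix.of fun i j : Fin (n + 1) => Real.exp (-((2 * s * ((j : ℝ) + 1)) * μ i))).det := by
    rw [Finset.mul_sum, ← Finset.sum_neg_distrib, Real.exp_sum, ← Matrix.det_mul_column]
    congr 1
    ext i j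
    simp only [Matrix.of_apply, Matrix.vandermonde_apply]
    rw [← Real.exp_nat_mul, ← Real.exp_add]
    congr 1; ring
  simp_rw [h1]
  rw [integral_det_box (fun j x => Real.exp (-((2 * s * ((j : ℝ) + 1)) * x))) (by fun_prop),
    det_vandermonde_diff]
  have h2 : ((∏ j : Fin (n + 1), (2 * ((j : ℝ) + 1))⁻¹) / s ^ (n + 1)) =
      ∏ j : Fin (n + 1), (2 * s * ((j : ℝ) + 1))⁻¹ := by
    rw [Finset.prod_congr rfl fun (j : Fin (n + 1)) _ =>
      show (2 * s * ((j : ℝ) + 1))⁻¹ = (2 * ((j : ℝ) + 1))⁻¹ * s⁻¹ by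
        rw [← mul_inv]; congr 1; ring, Finset.prod_mul_distrib]
    simp [div_eq_mul_inv]
  rw [h2, ← Matrix.det_mul_row]
  congr 1
  ext i j
  simp only [Matrix.of_apply]
  have hj : 2 * s * ((j : ℝ) + 1) ≠ 0 := by positivity
  rw [integral_exp_Icc _ hj _ _ (hl i.castSucc_lt_succ.le), ← Real.exp_nat_mul, ← Real.exp_nat_mul,
    div_eq_inv_mul]
  congr 3 <;> (push_cast; ring)

/-- The Laplace transform of the sum of the entries over Gelfand–Tsetlin patterns with top row `l`. -/
lemma integral_patterns (n : ℕ) :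
    ∃ c : ℝ, ∀ s : ℝ, 0 < s → ∀ l : Fin (n + 1) → ℝ, Antitone l →
      ∫ y in patterns l, Real.exp (-(2 * s * ∑ p, y p)) =
        c / s ^ ((n + 1) * n / 2) * (Matrix.vandermonde fun i => Real.exp (-(2 * s * l i))).det := by
  induction n with
  | zero =>
    refine ⟨1, fun s _ l hl => ?_⟩
    have : patterns l = Set.univ := by
      ext y
      simp only [patterns, antitone_glue]
      simp [hl, Subsingleton.antitone]
    rw [this]
    have : IsEmpty (Stair 0) := ⟨fun p => p.1.1.elim0⟩
    have hv : (volume : Measure (Stair 0 → ℝ)) Set.univ = 1 := by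
      rw [volume_pi, Measure.pi_of_empty (x := fun i => isEmptyElim i)]
      simp
    simp [Measure.real, hv]
  | succ n ih =>
    obtain ⟨c, hc⟩ := ih
    refine ⟨c * ∏ j : Fin (n + 1), (2 * ((j : ℝ) + 1))⁻¹, fun s hs l hl => ?_⟩
    have hbox {μ : Fin (n + 1) → ℝ}
        (hμ : μ ∈ Set.univ.pi fun i : Fin (n + 1) => Set.Icc (l i.succ) (l i.castSucc)) :
        Antitone μ := by
      intro i j hij
      rcases eq_or_lt_of_le hij with rfl | h
      · exact le_rfl
      · refine ((hμ j trivial).2.trans (hl ?_)).trans (hμ i trivial).1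
        rw [Fin.le_def]; simpa using h
    rw [integral_glue (patterns l) (isCompact_patterns l)
      (Set.univ.pi fun i : Fin (n + 1) => Set.Icc (l i.succ) (l i.castSucc))
      (MeasurableSet.univ_pi fun _ => measurableSet_Icc) _ _ (by fun_prop)]
    · have hmeas : MeasurableSet
          (Set.univ.pi fun i : Fin (n + 1) => Set.Icc (l i.succ) (l i.castSucc)) :=
        MeasurableSet.univ_pi fun _ => measurableSet_Icc
      rw [setIntegral_congr_fun (g := fun μ => c / s ^ ((n + 1) * n / 2) *
        (Real.exp (-(2 * s * ∑ i, μ i)) *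
          (Matrix.vandermonde fun i => Real.exp (-(2 * s * μ i))).det)) hmeas]
      · rw [integral_const_mul, integral_box_vandermonde s hs l hl]
        have hexp : (n + 1 + 1) * (n + 1) / 2 = (n + 1) * n / 2 + (n + 1) := by
          rw [show (n + 1 + 1) * (n + 1) = (n + 1) * n + (n + 1) * 2 by ring,
            Nat.add_mul_div_right _ _ (by norm_num)]
        rw [hexp]
        generalize (n + 1) * n / 2 = k
        field_simp
        ring
      · intro μ hμ
        simp only [sum_stair, glue_diag, glue_off]
        rw [mul_left_comm, ← hc s hs μ (hbox hμ), ← integral_const_mul]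
        congr 1
        ext y
        rw [← Real.exp_add]
        congr 1; ring
    · intro μ z
      simp only [patterns, Set.mem_univ_pi]
      show Antitone _ ↔ _ ∧ Antitone _
      rw [antitone_glue]
      simp only [glue_diag]
      tauto

/-! ### The Laplace transform of the order polytope -/

/-- The order polytope of the staircase poset: weakly decreasing fillings by numbers in `[0,1]`. -/
def orderPoly (r : ℕ) : Set (Stair r → ℝ) := {x | Antitone x ∧ ∀ p, x p ∈ Set.Icc (0 : ℝ) 1}

/-- The volume of the symmetric filling of the square determined by `x`: the off-diagonal entries
count twice. -/
noncomputable def wsum {r : ℕ} (x : Stair r → ℝ) : ℝ :=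
  ∑ p : Stair r, (if p.1.1 = p.1.2 then 1 else 2) * x p

/-- The weakly decreasing sequences in `[0,1]`, the possible diagonals of points of `orderPoly n`. -/
def decCube (n : ℕ) : Set (Fin n → ℝ) := {l | Antitone l ∧ ∀ i, l i ∈ Set.Icc (0 : ℝ) 1}

lemma continuous_wsum {r : ℕ} : Continuous (wsum (r := r)) := by
  unfold wsum; fun_prop

lemma orderPoly_eq (r : ℕ) :
    orderPoly r = {x | Antitone x} ∩ Set.univ.pi fun _ => Set.Icc (0 : ℝ) 1 := by
  ext x; simp only [orderPoly, Set.mem_inter_iff, Set.mem_univ_pi]; rfl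

lemma decCube_eq (r : ℕ) :
    decCube r = {x | Antitone x} ∩ Set.univ.pi fun _ => Set.Icc (0 : ℝ) 1 := by
  ext x; simp only [decCube, Set.mem_inter_iff, Set.mem_univ_pi]; rfl

lemma isCompact_orderPoly (r : ℕ) : IsCompact (orderPoly r) := by
  rw [orderPoly_eq]
  exact (isCompact_univ_pi fun _ => isCompact_Icc).inter_left isClosed_antitone

lemma measurableSet_decCube (n : ℕ) : MeasurableSet (decCube n) := by
  rw [decCube_eq]
  exact ((isCompact_univ_pi fun _ => isCompact_Icc).inter_left isClosed_antitone).measurableSet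

lemma wsum_glue {n : ℕ} (l : Fin (n + 1) → ℝ) (y : Stair n → ℝ) :
    wsum (glue n (l, y)) = ∑ i, l i + 2 * ∑ p, y p := by
  rw [wsum, sum_stair, Finset.mul_sum]
  simp only [glue_diag, glue_off]
  congr 1
  · simp [diagPos]
  · refine Finset.sum_congr rfl fun q _ => ?_
    have hq : (offPos q).1.1 ≠ (offPos q).1.2 := by
      have := q.2
      simp only [Fin.le_def] at this
      simp only [offPos, ne_eq, Fin.ext_iff, Fin.val_castSucc, Fin.val_succ]
      omega
    rw [if_neg hq]

/-- The bounds on the diagonal entries bound all entries, because every position lies between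
`(0, 0)` and `(n, n)`. -/
lemma glue_mem_orderPoly {n : ℕ} (l : Fin (n + 1) → ℝ) (y : Stair n → ℝ) :
    glue n (l, y) ∈ orderPoly (n + 1) ↔ l ∈ decCube (n + 1) ∧ y ∈ patterns l := by
  constructor
  · rintro ⟨h, h'⟩
    refine ⟨⟨((antitone_glue l y).mp h).1, fun i => ?_⟩, h⟩
    simpa [glue_diag] using h' (diagPos i)
  · rintro ⟨⟨_, h'⟩, h⟩
    have h : Antitone (glue n (l, y)) := h
    refine ⟨h, fun p => ⟨?_, ?_⟩⟩
    · have : p ≤ diagPos (Fin.last n) := ⟨Fin.le_last _, Fin.le_last _⟩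
      refine (h' (Fin.last n)).1.trans ?_
      simpa [glue_diag] using h this
    · have : diagPos 0 ≤ p := ⟨Fin.zero_le _, Fin.zero_le _⟩
      refine le_trans ?_ (h' 0).2
      simpa [glue_diag] using h this

lemma image_decCube (n : ℕ) (s : ℝ) (hs : 0 < s) :
    (fun (l : Fin n → ℝ) i => Real.exp (-(s * l i))) '' decCube n = ordCube n (Real.exp (-s)) := by
  ext u
  constructor
  · rintro ⟨l, ⟨hl, hb⟩, rfl⟩
    refine ⟨fun i _ => ⟨?_, ?_⟩, fun i j hij => ?_⟩
    · rw [Real.exp_le_exp]; nlinarith [(hb i).2]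
    · rw [Real.exp_le_one_iff]; nlinarith [(hb i).1]
    · simp only [Real.exp_le_exp]; nlinarith [hl hij]
  · rintro ⟨hb, hu⟩
    have hu : Monotone u := hu
    have hpos (i) : 0 < u i := (Real.exp_pos _).trans_le (hb i trivial).1
    refine ⟨fun i => -Real.log (u i) / s, ⟨fun i j hij => ?_, fun i => ⟨?_, ?_⟩⟩, ?_⟩
    · have := Real.log_le_log (hpos i) (hu hij)
      simp only
      gcongr
    · exact div_nonneg (neg_nonneg.mpr (Real.log_nonpos (hpos i).le (hb i trivial).2)) hs.le
    · rw [div_le_one hs]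
      have := Real.log_le_log (Real.exp_pos _) (hb i trivial).1
      rw [Real.log_exp] at this
      linarith
    · ext i
      simp only
      rw [mul_div_cancel₀ _ hs.ne', neg_neg, Real.exp_log (hpos i)]

/-- The substitution `u_i = exp(-s l_i)`. -/
lemma integral_exp_subst (n : ℕ) (s : ℝ) (hs : 0 < s) (g : (Fin n → ℝ) → ℝ) :
    ∫ u in ordCube n (Real.exp (-s)), g u =
      s ^ n * ∫ l in decCube n, Real.exp (-(s * ∑ i, l i)) * g (fun i => Real.exp (-(s * l i))) := by
  rw [← image_decCube n s hs, integral_image_eq_integral_abs_det_fderiv_smul volume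
    (measurableSet_decCube n)
    (f' := fun l => ContinuousLinearMap.pi fun i =>
      (Real.exp (-(s * l i)) * (-s)) • ContinuousLinearMap.proj (R := ℝ) (φ := fun _ : Fin n => ℝ) i),
    ← integral_const_mul]
  · congr 1
    ext l
    have hdet : (ContinuousLinearMap.pi fun i => (Real.exp (-(s * l i)) * (-s)) •
        ContinuousLinearMap.proj (R := ℝ) (φ := fun _ : Fin n => ℝ) i).det =
        ∏ i, (Real.exp (-(s * l i)) * (-s)) := by
      rw [← Matrix.det_diagonal, ← LinearMap.det_toLin', Matrix.diagonal_toLin']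
      rfl
    rw [hdet, Finset.abs_prod, smul_eq_mul, ← mul_assoc]
    congr 1
    simp only [abs_mul, Real.abs_exp, abs_neg, abs_of_pos hs]
    rw [Finset.prod_mul_distrib, ← Real.exp_sum, Finset.sum_neg_distrib, ← Finset.mul_sum]
    simp [mul_comm]
  · intro l _
    refine HasFDerivAt.hasFDerivWithinAt (hasFDerivAt_pi.mpr fun i => ?_)
    have h1 : HasDerivAt (fun x : ℝ => Real.exp (-(s * x))) (Real.exp (-(s * l i)) * (-s)) (l i) := by
      simpa using ((hasDerivAt_id (l i)).const_mul s).neg.exp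
    exact h1.comp_hasFDerivAt l (ContinuousLinearMap.proj (R := ℝ) (φ := fun _ : Fin n => ℝ) i).hasFDerivAt
  · intro l _ l' _ h
    ext i
    have := congrFun h i
    simp only [Real.exp_eq_exp, neg_inj] at this
    exact mul_left_cancel₀ (ne_of_gt hs) this

/-- Up to a constant, the Laplace transform of `wsum` on the order polytope is that of a sum of
`m + 1` uniform variables on `[0,1]` and `(m+1)m/2` uniform variables on `[0,2]`. -/
lemma laplace_orderPoly (m : ℕ) : ∃ κ : ℝ, ∀ s : ℝ, 0 < s →
    ∫ x in orderPoly (m + 1), Real.exp (-s * wsum x) =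
      κ * (((1 - Real.exp (-s)) / s) ^ (m + 1) *
        ((1 - Real.exp (-(2 * s))) / (2 * s)) ^ ((m + 1) * m / 2)) := by
  obtain ⟨c, hc⟩ := integral_patterns m
  obtain ⟨κ, hκ⟩ := integral_ordCube m
  refine ⟨c * κ * 2 ^ ((m + 1) * m / 2), fun s hs => ?_⟩
  rw [integral_glue _ (isCompact_orderPoly _) _ (measurableSet_decCube _) glue_mem_orderPoly _
    ((continuous_wsum.const_mul _).rexp)]
  have hV := integral_exp_subst (m + 1) s hs fun u => (Matrix.vandermonde fun i => u i ^ 2).det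
  rw [hκ _ (Real.exp_le_one_iff.mpr (by linarith))] at hV
  rw [setIntegral_congr_fun (g := fun l => c / s ^ ((m + 1) * m / 2) *
    (Real.exp (-(s * ∑ i, l i)) *
      (Matrix.vandermonde fun i => Real.exp (-(s * l i)) ^ 2).det)) (measurableSet_decCube _)]
  · rw [integral_const_mul]
    have h2 : Real.exp (-(2 * s)) = Real.exp (-s) ^ 2 := by
      rw [← Real.exp_nat_mul]; congr 1; push_cast; ring
    rw [h2, show (1 : ℝ) - Real.exp (-s) ^ 2 = (1 - Real.exp (-s)) * (1 + Real.exp (-s)) by ring]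
    generalize (∫ l in decCube (m + 1), Real.exp (-(s * ∑ i, l i)) *
      (Matrix.vandermonde fun i => Real.exp (-(s * l i)) ^ 2).det) = I at hV ⊢
    generalize (m + 1) * m / 2 = k at hV ⊢
    generalize Real.exp (-s) = q at hV ⊢
    have hI : I = κ * ((1 - q) ^ (k + (m + 1)) * (1 + q) ^ k) / s ^ (m + 1) := by
      rw [hV]; field_simp
    rw [hI]
    simp only [div_pow, mul_pow, pow_add]
    field_simp
  · intro l hl
    have h2 : ∀ x : ℝ, Real.exp (-(s * x)) ^ 2 = Real.exp (-(2 * s * x)) := fun x => by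
      rw [← Real.exp_nat_mul]; congr 1; push_cast; ring
    simp only [h2, wsum_glue]
    rw [mul_left_comm, ← hc s hs l hl.1, ← integral_const_mul]
    congr 1
    ext y
    rw [← Real.exp_add]
    congr 1; ring

/-! ### The Laplace transform of the limit law -/

instance isProbabilityMeasure_unif01 : IsProbabilityMeasure unif01 :=
  ⟨by simp [unif01]⟩

lemma measurable_mixSum (a b : ℕ) : Measurable (fun x : Fin (a + b) → ℝ =>
    ∑ i : Fin (a + b), if (i : ℕ) < a then x i else 2 * x i) := by
  refine Finset.measurable_sum _ fun i _ => ?_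
  split_ifs <;> fun_prop

instance isProbabilityMeasure_unifConvMix (a b : ℕ) : IsProbabilityMeasure (unifConvMix a b) :=
  Measure.isProbabilityMeasure_map (measurable_mixSum a b).aemeasurable

lemma exp_mixSum (a b : ℕ) (t : ℝ) (x : Fin (a + b) → ℝ) :
    Real.exp (t * ∑ i : Fin (a + b), if (i : ℕ) < a then x i else 2 * x i) =
      ∏ i : Fin (a + b), Real.exp (-((if (i : ℕ) < a then -t else -(2 * t)) * x i)) := by
  rw [← Real.exp_sum, Finset.mul_sum]
  congr 1
  refine Finset.sum_congr rfl fun i _ => ?_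
  split_ifs <;> ring

lemma integrable_exp_unifConvMix (a b : ℕ) (t : ℝ) :
    Integrable (fun x => Real.exp (t * x)) (unifConvMix a b) := by
  rw [unifConvMix, integrable_map_measure (by fun_prop) (measurable_mixSum a b).aemeasurable]
  simp only [Function.comp_def, exp_mixSum]
  refine Integrable.fintype_prod
    (f := fun (i : Fin (a + b)) x => Real.exp (-((if (i : ℕ) < a then -t else -(2 * t)) * x)))
    fun i => ?_
  exact (by fun_prop : Continuous fun x : ℝ =>
    Real.exp (-((if (i : ℕ) < a then -t else -(2 * t)) * x))).continuousOn.integrableOn_compact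
      isCompact_Icc

lemma laplace_unifConvMix (a b : ℕ) (s : ℝ) (hs : 0 < s) :
    ∫ x, Real.exp (-s * x) ∂(unifConvMix a b) =
      ((1 - Real.exp (-s)) / s) ^ a * ((1 - Real.exp (-(2 * s))) / (2 * s)) ^ b := by
  rw [unifConvMix, integral_map (measurable_mixSum a b).aemeasurable (by fun_prop)]
  simp only [exp_mixSum, neg_neg, mul_neg]
  rw [integral_fintype_prod_eq_prod
    (fun (i : Fin (a + b)) x => Real.exp (-((if (i : ℕ) < a then s else 2 * s) * x))),
    Fin.prod_univ_add]
  simp only [Fin.val_castAdd, Fin.is_lt, if_true, Fin.val_natAdd, unif01,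
    not_lt.mpr (Nat.le_add_right _ _), if_false, Finset.prod_const, Finset.card_univ,
    Fintype.card_fin]
  rw [integral_exp_Icc s hs.ne' 0 1 zero_le_one,
    integral_exp_Icc (2 * s) (by positivity) 0 1 zero_le_one]
  simp

/-- Under the normalized Lebesgue measure of the order polytope, `wsum` has the limit law. -/
lemma integral_orderPoly (m : ℕ) (f : ℝ → ℝ) (hf : Continuous f) :
    ∫ x in orderPoly (m + 1), f (wsum x) =
      volume.real (orderPoly (m + 1)) * ∫ x, f x ∂(unifConvMix (m + 1) ((m + 1) * m / 2)) := by
  obtain ⟨κ, hκ⟩ := laplace_orderPoly m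
  set ν := unifConvMix (m + 1) ((m + 1) * m / 2) with hν
  have hfin : IsFiniteMeasure (volume.restrict (orderPoly (m + 1))) :=
    ⟨by simpa using (isCompact_orderPoly (m + 1)).measure_lt_top⟩
  have hw : AEMeasurable (wsum (r := m + 1)) (volume.restrict (orderPoly (m + 1))) :=
    continuous_wsum.measurable.aemeasurable
  have hκ0 : 0 ≤ κ := by
    have h1 : 0 ≤ ∫ x in orderPoly (m + 1), Real.exp (-1 * wsum x) :=
      integral_nonneg fun x => (Real.exp_pos _).le
    have h2 : Real.exp (-1) < 1 := by rw [Real.exp_lt_one_iff]; norm_num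
    have h3 : Real.exp (-(2 * 1)) < 1 := by rw [Real.exp_lt_one_iff]; norm_num
    rw [hκ 1 one_pos] at h1
    refine nonneg_of_mul_nonneg_left h1 (mul_pos (pow_pos ?_ _) (pow_pos ?_ _))
    · linarith
    · exact div_pos (by linarith) (by norm_num)
  have hmeas : Measure.map (wsum (r := m + 1)) (volume.restrict (orderPoly (m + 1))) =
      ENNReal.ofReal κ • ν := by
    have : IsFiniteMeasure (ENNReal.ofReal κ • ν) := Measure.smul_finite _ ENNReal.ofReal_ne_top
    refine ext_of_mgf_neg ?_ ?_ ?_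
    · intro t
      rw [integrable_map_measure (by fun_prop) hw]
      exact ((continuous_wsum.const_mul t).rexp).continuousOn.integrableOn_compact
        (isCompact_orderPoly _)
    · intro t
      exact (integrable_exp_unifConvMix _ _ t).smul_measure ENNReal.ofReal_ne_top
    · intro s hs
      rw [integral_map hw (by fun_prop), hκ s hs, integral_smul_measure, hν,
        laplace_unifConvMix _ _ s hs, ENNReal.toReal_ofReal hκ0, smul_eq_mul]
  have key (g : ℝ → ℝ) (hg : Continuous g) :
      ∫ x in orderPoly (m + 1), g (wsum x) = κ * ∫ x, g x ∂ν := by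
    rw [← integral_map hw hg.aestronglyMeasurable, hmeas, integral_smul_measure,
      ENNReal.toReal_ofReal hκ0, smul_eq_mul]
  have hvol := key (fun _ => 1) continuous_const
  rw [key f hf]
  simp only [integral_const, smul_eq_mul, mul_one, measureReal_restrict_apply_univ,
    probReal_univ] at hvol
  rw [hvol]

/-! ### Riemann sums over symmetric plane partitions -/

lemma convex_orderPoly (r : ℕ) : Convex ℝ (orderPoly r) := by
  rintro x ⟨hx, hx'⟩ y ⟨hy, hy'⟩ a b ha hb hab
  refine ⟨fun p q hpq => ?_, fun p => convex_Icc (0 : ℝ) 1 (hx' p) (hy' p) ha hb hab⟩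
  simp only [Pi.add_apply, Pi.smul_apply, smul_eq_mul]
  have h1 := hx hpq
  have h2 := hy hpq
  gcongr

lemma volume_orderPoly_pos (r : ℕ) : 0 < volume.real (orderPoly r) := by
  refine ENNReal.toReal_pos (ne_of_gt ?_) (isCompact_orderPoly r).measure_lt_top.ne
  -- Around the strictly decreasing filling `2r - i - j` there is a whole box of decreasing fillings.
  let h : Stair r → ℕ := fun p => 2 * r - p.1.1 - p.1.2
  have hM : (0 : ℝ) < 2 * r + 1 := by positivity
  have hsub : (Set.univ.pi fun p : Stair r =>
      Set.Icc ((h p : ℝ) / (2 * r + 1)) (((h p : ℝ) + 1) / (2 * r + 1))) ⊆ orderPoly r := by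
    intro x hx
    refine ⟨fun p q hpq => ?_, fun p => ⟨?_, ?_⟩⟩
    · rcases eq_or_ne p q with rfl | hne
      · exact le_rfl
      · refine ((hx q trivial).2.trans ?_).trans (hx p trivial).1
        have hle : h q + 1 ≤ h p := by
          have h1 : (p.1.1 : ℕ) ≤ q.1.1 := hpq.1
          have h2 : (p.1.2 : ℕ) ≤ q.1.2 := hpq.2
          have h3 : ¬ ((p.1.1 : ℕ) = q.1.1 ∧ (p.1.2 : ℕ) = q.1.2) := by
            rintro ⟨h3, h4⟩
            exact hne (Subtype.ext (Prod.ext (Fin.ext h3) (Fin.ext h4)))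
          have h5 := q.1.1.2
          have h6 := q.1.2.2
          simp only [h]
          omega
        have : (h q : ℝ) + 1 ≤ h p := by exact_mod_cast hle
        gcongr
    · exact le_trans (by positivity) (hx p trivial).1
    · refine (hx p trivial).2.trans ?_
      rw [div_le_one hM]
      have : h p ≤ 2 * r := by simp only [h]; omega
      have : (h p : ℝ) ≤ 2 * r := by exact_mod_cast this
      linarith
  refine lt_of_lt_of_le ?_ (measure_mono hsub)
  rw [volume_pi_pi, pos_iff_ne_zero, Finset.prod_ne_zero_iff]
  intro p _
  rw [Real.volume_Icc, ← sub_div, add_sub_cancel_left]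
  simpa using hM

/-- The restriction of `p` to the staircase, divided by `t`. -/
noncomputable def rescale {r t : ℕ} (p : Fin r → Fin r → Fin (t + 1)) (q : Stair r) : ℝ :=
  ((p q.1.1 q.1.2 : ℕ) : ℝ) / t

lemma mem_SPP {r t : ℕ} {p : Fin r → Fin r → Fin (t + 1)} :
    p ∈ SPP r t ↔ (∀ i i' j j' : Fin r, i ≤ i' → j ≤ j' → (p i' j' : ℕ) ≤ (p i j : ℕ)) ∧
      ∀ i j, p i j = p j i := by
  simp [SPP, PP]

lemma sum_symm_eq {r : ℕ} (a : Fin r → Fin r → ℝ) (ha : ∀ i j, a i j = a j i) :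
    ∑ i, ∑ j, a i j = ∑ p : Stair r, (if p.1.1 = p.1.2 then 1 else 2) * a p.1.1 p.1.2 := by
  let b : Fin r → Fin r → ℝ := fun i j => if i < j then a i j else 0
  have h1 : ∑ i, ∑ j, a i j = ∑ i, ∑ j, (if i = j then a i j else 0) + ∑ i, ∑ j, b i j
      + ∑ i, ∑ j, b j i := by
    simp only [← Finset.sum_add_distrib]
    refine Finset.sum_congr rfl fun i _ => Finset.sum_congr rfl fun j _ => ?_
    simp only [b]
    rcases lt_trichotomy i j with h | rfl | h
    · simp [h, h.ne, h.not_gt]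
    · simp
    · simp [h, h.ne', h.not_gt, ha i j]
  have h2 : ∑ p : Stair r, (if p.1.1 = p.1.2 then 1 else 2) * a p.1.1 p.1.2 =
      ∑ i, ∑ j, if i ≤ j then (if i = j then 1 else 2) * a i j else 0 := by
    rw [← Fintype.sum_prod_type' (f := fun i j : Fin r =>
      if i ≤ j then (if i = j then 1 else 2) * a i j else 0), ← Finset.sum_filter]
    exact (Finset.sum_subtype (Finset.univ.filter fun q : Fin r × Fin r => q.1 ≤ q.2) (by simp)
      fun q => (if q.1 = q.2 then 1 else 2) * a q.1 q.2).symm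
  rw [h1, Finset.sum_comm (f := fun i j => b j i), h2]
  simp only [← Finset.sum_add_distrib]
  refine Finset.sum_congr rfl fun i _ => Finset.sum_congr rfl fun j _ => ?_
  simp only [b]
  rcases lt_trichotomy i j with h | rfl | h
  · simp [h, h.ne, h.le, two_mul]
  · simp
  · simp [h.ne', h.not_gt, h.not_ge]

lemma vol_div_eq {r t : ℕ} {p : Fin r → Fin r → Fin (t + 1)} (hp : p ∈ SPP r t) :
    (vol p : ℝ) / t = wsum (rescale p) := by
  have := sum_symm_eq (fun i j => ((p i j : ℕ) : ℝ) / t) fun i j => by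
    rw [(mem_SPP.mp hp).2 i j]
  rw [wsum]
  simp only [rescale]
  rw [← this, vol]
  push_cast
  simp only [Finset.sum_div]

lemma rescale_injOn (r t : ℕ) (ht : 0 < t) :
    Set.InjOn (rescale (r := r) (t := t)) (SPP r t) := by
  intro p hp q hq h
  have ht' : (t : ℝ) ≠ 0 := by positivity
  have key (i j : Fin r) (hij : i ≤ j) : p i j = q i j := by
    have := congrFun h ⟨(i, j), hij⟩
    simp only [rescale] at this
    rw [div_left_inj' ht'] at this
    exact Fin.ext (by exact_mod_cast this)
  ext i j
  rcases le_total i j with hij | hij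
  · rw [key i j hij]
  · rw [(mem_SPP.mp hp).2, (mem_SPP.mp hq).2, key j i hij]

open scoped Pointwise in
/-- Symmetric plane partitions correspond to the lattice points of mesh `1/t` in the order polytope;
the filling is recovered from the staircase as `(i, j) ↦ x (min i j, max i j)`. -/
lemma rescale_image (r t : ℕ) (ht : 0 < t) :
    rescale '' (SPP r t : Set (Fin r → Fin r → Fin (t + 1))) =
      orderPoly r ∩ (t : ℝ)⁻¹ • (Submodule.span ℤ (Set.range (Pi.basisFun ℝ (Stair r))) :
        Set (Stair r → ℝ)) := by
  have : NeZero t := ⟨ht.ne'⟩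
  have ht' : (0 : ℝ) < t := by positivity
  ext x
  rw [Set.mem_inter_iff, ← Submodule.coe_pointwise_smul, SetLike.mem_coe,
    BoxIntegral.unitPartition.mem_smul_span_iff]
  constructor
  · rintro ⟨p, hp, rfl⟩
    refine ⟨⟨fun q q' h => ?_, fun q => ⟨?_, ?_⟩⟩, fun q => ⟨(p q.1.1 q.1.2 : ℕ), ?_⟩⟩
    · have := (mem_SPP.mp hp).1 _ _ _ _ h.1 h.2
      simp only [rescale]
      gcongr
    · simp only [rescale]; positivity
    · simp only [rescale]
      rw [div_le_one ht']
      exact_mod_cast Nat.lt_succ_iff.mp (p q.1.1 q.1.2).2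
    · simp only [rescale]
      rw [mul_div_cancel₀ _ ht'.ne']
      simp
  · rintro ⟨⟨hx, hb⟩, hz⟩
    choose z hz using hz
    have hz (q) : (z q : ℝ) = t * x q := hz q
    have hz0 (q) : 0 ≤ z q := by
      have : (0 : ℝ) ≤ z q := by rw [hz]; exact mul_nonneg ht'.le (hb q).1
      exact_mod_cast this
    have hzt (q) : z q ≤ t := by
      have : (z q : ℝ) ≤ t := by rw [hz]; nlinarith [(hb q).2]
      exact_mod_cast this
    have hza {q q' : Stair r} (h : q ≤ q') : z q' ≤ z q := by
      have : (z q' : ℝ) ≤ z q := by rw [hz, hz]; nlinarith [hx h]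
      exact_mod_cast this
    let e : Fin r → Fin r → Stair r := fun i j => ⟨(min i j, max i j), min_le_max⟩
    refine ⟨fun i j => ⟨(z (e i j)).toNat, by have := hzt (e i j); omega⟩, ?_, ?_⟩
    · rw [SetLike.mem_coe, mem_SPP]
      refine ⟨fun i i' j j' hi hj => ?_, fun i j => ?_⟩
      · exact Int.toNat_le_toNat (hza (show e i j ≤ e i' j' from
          ⟨min_le_min hi hj, max_le_max hi hj⟩))
      · have : e i j = e j i := by simp only [e, min_comm, max_comm]
        simp only [this]
    · ext q
      have he : e q.1.1 q.1.2 = q := by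
        refine Subtype.ext (Prod.ext ?_ ?_)
        · exact min_eq_left q.2
        · exact max_eq_right q.2
      simp only [rescale, he]
      rw [div_eq_iff ht'.ne', mul_comm, ← hz]
      have := Int.toNat_of_nonneg (hz0 q)
      exact_mod_cast congrArg (Int.cast : ℤ → ℝ) this

/-- The sums over symmetric plane partitions are Riemann sums over the order polytope. -/
lemma tendsto_riemann (r : ℕ) (F : ℝ → ℝ) (hF : Continuous F) :
    Tendsto (fun t : ℕ => (∑ p ∈ SPP r t, F ((vol p : ℝ) / t)) / (t : ℝ) ^ Fintype.card (Stair r))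
      atTop (nhds (∫ x in orderPoly r, F (wsum x))) := by
  have h := tendsto_tsum_div_pow_atTop_integral (orderPoly r) (fun x => F (wsum x))
    (hF.comp continuous_wsum) (isCompact_orderPoly r).isBounded (isCompact_orderPoly r).measurableSet
    ((convex_orderPoly r).addHaar_frontier volume)
  refine h.congr' ?_
  filter_upwards [eventually_gt_atTop 0] with t ht
  congr 1
  rw [← rescale_image r t ht, tsum_image (fun x => F (wsum x)) (rescale_injOn r t ht)]
  rw [Finset.tsum_subtype' (SPP r t) fun p => F (wsum (rescale p))]
  exact Finset.sum_congr rfl fun p hp => by rw [vol_div_eq hp]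

/-- For fixed `r`, as `t → ∞` the rescaled volumes `Z_t = X_t/t` of uniformly random
symmetric plane partitions in `(r,r,t)`-boxes converge in distribution to the convolution
of `r` copies of the uniform distribution on `[0,1]` with `r(r−1)/2` copies of the uniform
distribution on `[0,2]`; i.e., for every bounded continuous test function `f`, the
expectation `E[f(Z_t)]` converges to the integral of `f` against that convolution. -/
theorem volume_limit_nonconcentrated_SPP (r : ℕ) (hr : 0 < r) :
    ∀ f : BoundedContinuousFunction ℝ ℝ,
      Tendsto (fun t : ℕ =>
        (∑ p ∈ SPP r t, f ((vol p : ℝ) / (t : ℝ))) / ((SPP r t).card : ℝ))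
        atTop (nhds (∫ x, f x ∂(unifConvMix r (r * (r - 1) / 2)))) := by
  intro f
  obtain ⟨m, rfl⟩ : ∃ m, r = m + 1 := ⟨r - 1, by omega⟩
  rw [Nat.add_sub_cancel]
  have hpos := volume_orderPoly_pos (m + 1)
  have h1 := tendsto_riemann (m + 1) f f.continuous
  have h2 := tendsto_riemann (m + 1) (fun _ => 1) continuous_const
  rw [integral_orderPoly m f f.continuous] at h1
  simp only [integral_const, smul_eq_mul, mul_one, measureReal_restrict_apply_univ,
    Finset.sum_const, nsmul_eq_mul] at h2
  have h3 := h1.div h2 hpos.ne'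
  rw [mul_div_cancel_left₀ _ hpos.ne'] at h3
  refine h3.congr' ?_
  filter_upwards [eventually_gt_atTop 0] with t ht
  simp only [Pi.div_apply]
  exact div_div_div_cancel_right₀ (by positivity) _ _
end

section
/- Fix positive integers h and w and equip the (finite) set of all Ferrers diagrams with exactly h rows and exactly w columns with the uniform probability distribution. Then the expected area equals (h−1)(w−1)/2 + (h + w − 1), and the variance of the area equals (h−1)(w−1)(h+w−1)/12. -/
/-!
Removing from a Ferrers diagram with `h, w ≥ 2` either its last row, when that row consists of one
square, or its first column, when the last row is longer, gives for every weight `f` the recursion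
`∑_{F(h,w)} f(area) = ∑_{F(h-1,w)} f(area + 1) + ∑_{F(h,w-1)} f(area + h)`
(`sum_area_rec`), which is the `q`-Pascal rule for the Gaussian binomial coefficients.
For `h = 1` or `w = 1` there is a single diagram.

With `f = 1` the recursion is Pascal's rule, so there are `C(h+w-2, h-1)` diagrams (`card_eq`).
With `f` the identity and the square, it shows by induction that the first two moments of the
area satisfy the claimed formulas (`moments`): the two smaller families have
`(h-1)/(h+w-2)` and `(w-1)/(h+w-2)` times as many members as `F(h,w)`, and after this substitution
only a polynomial identity is left.
-/

open Finset

/-- Ferrers diagrams with exactly `h` rows and exactly `w` columns: weakly decreasing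
sequences `λ_1 ≥ … ≥ λ_h ≥ 1` of row lengths with `λ_1 = w`. -/
def FerrersHW (h w : ℕ) : Finset (Fin h → Fin (w + 1)) :=
  Finset.univ.filter fun l =>
    (∀ i j : Fin h, i ≤ j → (l j : ℕ) ≤ (l i : ℕ)) ∧
    (∀ i : Fin h, 1 ≤ (l i : ℕ)) ∧
    (∀ i : Fin h, (i : ℕ) = 0 → (l i : ℕ) = w)

/-- The area of a Ferrers diagram. -/
def areaF {h w : ℕ} (l : Fin h → Fin (w + 1)) : ℕ := ∑ i, (l i : ℕ)

/-- The mean area for the uniform distribution on Ferrers diagrams with `h` rows and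
`w` columns. -/
noncomputable def meanAreaHW (h w : ℕ) : ℝ :=
  (∑ l ∈ FerrersHW h w, (areaF l : ℝ)) / ((FerrersHW h w).card : ℝ)

/-- The variance of the area for the uniform distribution on Ferrers diagrams with `h`
rows and `w` columns. -/
noncomputable def varAreaHW (h w : ℕ) : ℝ :=
  (∑ l ∈ FerrersHW h w, ((areaF l : ℝ) - meanAreaHW h w) ^ 2) / ((FerrersHW h w).card : ℝ)

theorem mem_ferrersHW {h w : ℕ} (l : Fin h → Fin (w + 1)) :
    l ∈ FerrersHW h w ↔ (∀ i j : Fin h, i ≤ j → (l j : ℕ) ≤ (l i : ℕ)) ∧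
      (∀ i : Fin h, 1 ≤ (l i : ℕ)) ∧ (∀ i : Fin h, (i : ℕ) = 0 → (l i : ℕ) = w) := by
  simp [FerrersHW]

theorem sum_area_one_row (b : ℕ) (f : ℕ → ℝ) :
    ∑ l ∈ FerrersHW 1 (b + 1), f (areaF l) = f (b + 1) := by
  have : FerrersHW 1 (b + 1) = {fun _ => Fin.last (b + 1)} := by
    ext l
    rw [mem_ferrersHW, mem_singleton]
    constructor
    · rintro ⟨-, -, h⟩
      funext i
      exact Fin.ext (h i (by omega))
    · rintro rfl
      simp
  rw [this, sum_singleton]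
  simp [areaF]

theorem sum_area_one_column (a : ℕ) (f : ℕ → ℝ) :
    ∑ l ∈ FerrersHW (a + 1) 1, f (areaF l) = f (a + 1) := by
  have : FerrersHW (a + 1) 1 = {fun _ => Fin.last 1} := by
    ext l
    rw [mem_ferrersHW, mem_singleton]
    constructor
    · rintro ⟨-, h, -⟩
      funext i
      have := h i
      have := (l i).isLt
      exact Fin.ext (by simp only [Fin.val_last]; omega)
    · rintro rfl
      simp
  rw [this, sum_singleton]
  simp [areaF]

/-- Deleting the last row is a bijection from the diagrams whose last row has length one to the
diagrams with one row fewer. -/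
theorem sum_area_last_row_one (a b : ℕ) (f : ℕ → ℝ) :
    ∑ l ∈ (FerrersHW (a + 2) (b + 2)).filter (fun l => (l (Fin.last (a + 1)) : ℕ) = 1),
        f (areaF l) =
      ∑ l ∈ FerrersHW (a + 1) (b + 2), f (areaF l + 1) := by
  symm
  refine Finset.sum_nbij' (fun l => Fin.snoc (α := fun _ => Fin (b + 3)) l ⟨1, by omega⟩)
    (fun l => Fin.init (α := fun _ => Fin (b + 3)) l) ?_ ?_ ?_ ?_ ?_
  · intro l hl
    rw [mem_ferrersHW] at hl
    obtain ⟨h1, h2, h3⟩ := hl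
    rw [mem_filter, mem_ferrersHW]
    refine ⟨⟨?_, ?_, ?_⟩, by simp⟩
    · intro i j
      induction i using Fin.lastCases with
      | last =>
        induction j using Fin.lastCases with
        | last => simp
        | cast j =>
          intro h
          exact absurd (Fin.castSucc_lt_last j) (not_lt.mpr h)
      | cast i =>
        induction j using Fin.lastCases with
        | last => simpa using fun _ => h2 i
        | cast j => simpa using h1 i j
    · intro i
      induction i using Fin.lastCases with
      | last => simp
      | cast i => simpa using h2 i
    · intro i
      induction i using Fin.lastCases with
      | last => simp
      | cast i => simpa using h3 i
  · intro l hl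
    rw [mem_filter, mem_ferrersHW] at hl
    obtain ⟨⟨h1, h2, h3⟩, -⟩ := hl
    rw [mem_ferrersHW]
    exact ⟨fun i j h => h1 _ _ (by simpa using h), fun i => h2 _, fun i h => h3 _ (by simpa using h)⟩
  · intro l _
    simp
  · intro l hl
    have h := (mem_filter.mp hl).2
    have e : (⟨1, by omega⟩ : Fin (b + 3)) = l (Fin.last (a + 1)) := Fin.ext h.symm
    simp only [e]
    exact Fin.snoc_init_self (α := fun _ => Fin (b + 3)) l
  · intro l _
    simp [areaF, Fin.sum_univ_castSucc (n := a + 1)]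

/-- Deleting the first column is a bijection from the diagrams whose last row is longer than one to
the diagrams with one column fewer. -/
theorem sum_area_last_row_ne_one (a b : ℕ) (f : ℕ → ℝ) :
    ∑ l ∈ (FerrersHW (a + 2) (b + 2)).filter (fun l => ¬ (l (Fin.last (a + 1)) : ℕ) = 1),
        f (areaF l) =
      ∑ l ∈ FerrersHW (a + 2) (b + 1), f (areaF l + (a + 2)) := by
  symm
  refine Finset.sum_nbij' (fun l i => (l i).succ)
    (fun l i => ⟨(l i : ℕ) - 1, by have := (l i).isLt; omega⟩) ?_ ?_ ?_ ?_ ?_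
  · intro l hl
    rw [mem_ferrersHW] at hl
    obtain ⟨h1, h2, h3⟩ := hl
    rw [mem_filter, mem_ferrersHW]
    refine ⟨⟨fun i j h => by simpa using h1 i j h, fun i => by simp, fun i h => ?_⟩, ?_⟩
    · simpa using h3 i h
    · have := h2 (Fin.last (a + 1))
      simp only [Fin.val_succ]
      omega
  · intro l hl
    rw [mem_filter, mem_ferrersHW] at hl
    obtain ⟨⟨h1, h2, h3⟩, h4⟩ := hl
    rw [mem_ferrersHW]
    refine ⟨fun i j h => ?_, fun i => ?_, fun i h => ?_⟩
    · exact Nat.sub_le_sub_right (h1 i j h) 1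
    · have := h1 i _ (Fin.le_last i)
      have := h2 (Fin.last (a + 1))
      simp only
      omega
    · have := h3 i h
      simp only
      omega
  · intro l _
    simp
  · intro l hl
    rw [mem_filter, mem_ferrersHW] at hl
    funext i
    have := hl.1.2.1 i
    apply Fin.ext
    simp only [Fin.val_succ]
    omega
  · intro l _
    simp [areaF, sum_add_distrib]

theorem sum_area_rec (a b : ℕ) (f : ℕ → ℝ) :
    ∑ l ∈ FerrersHW (a + 2) (b + 2), f (areaF l) =
      ∑ l ∈ FerrersHW (a + 1) (b + 2), f (areaF l + 1) +
        ∑ l ∈ FerrersHW (a + 2) (b + 1), f (areaF l + (a + 2)) := by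
  rw [← sum_area_last_row_one, ← sum_area_last_row_ne_one, sum_filter_add_sum_filter_not]

theorem card_eq (a b : ℕ) :
    ((FerrersHW (a + 1) (b + 1)).card : ℝ) = ((a + b).choose a : ℝ) := by
  have key : ∀ h w : ℕ, ((FerrersHW h w).card : ℝ) = ∑ l ∈ FerrersHW h w,
      (fun _ : ℕ => (1 : ℝ)) (areaF l) := by simp
  induction a generalizing b with
  | zero => rw [key, sum_area_one_row b (fun _ => 1)]; simp
  | succ a iha =>
    induction b with
    | zero => rw [key, sum_area_one_column (a + 1) (fun _ => 1)]; simp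
    | succ b ihb =>
      rw [key, sum_area_rec a b (fun _ => 1), ← key, ← key, iha, ihb]
      have : (a + 1 + (b + 1)).choose (a + 1)
          = (a + (b + 1)).choose a + (a + 1 + b).choose (a + 1) := by
        rw [show a + 1 + (b + 1) = (a + (b + 1)) + 1 by ring, Nat.choose_succ_succ,
          show a + 1 + b = a + (b + 1) by ring]
      rw [this]
      push_cast
      rfl

theorem card_pos (a b : ℕ) : 0 < ((FerrersHW (a + 1) (b + 1)).card : ℝ) := by
  rw [card_eq]
  exact_mod_cast Nat.choose_pos (by omega)

theorem card_fewer_rows (a b : ℕ) :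
    ((FerrersHW (a + 1) (b + 2)).card : ℝ) =
      (FerrersHW (a + 2) (b + 2)).card * ((a + 1) / (a + b + 2)) := by
  rw [card_eq a (b + 1), card_eq (a + 1) (b + 1)]
  have h := Nat.add_one_mul_choose_eq (a + (b + 1)) a
  rw [show a + (b + 1) + 1 = a + 1 + (b + 1) by ring] at h
  have hr : ((a + 1 + (b + 1) : ℕ) : ℝ) * ((a + (b + 1)).choose a : ℝ) =
    ((a + 1 + (b + 1)).choose (a + 1) : ℝ) * ((a + 1 : ℕ) : ℝ) := by exact_mod_cast h
  push_cast at hr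
  have : (a : ℝ) + b + 2 ≠ 0 := by positivity
  field_simp
  linear_combination hr

theorem card_fewer_columns (a b : ℕ) :
    ((FerrersHW (a + 2) (b + 1)).card : ℝ) =
      (FerrersHW (a + 2) (b + 2)).card * ((b + 1) / (a + b + 2)) := by
  have h := sum_area_rec a b (fun _ => 1)
  simp only [sum_const, nsmul_eq_mul, mul_one] at h
  have hr := card_fewer_rows a b
  have : (a : ℝ) + b + 2 ≠ 0 := by positivity
  have e : ((b : ℝ) + 1) / (a + b + 2) = 1 - (a + 1) / (a + b + 2) := by
    field_simp
    ring
  rw [e]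
  linear_combination -hr - h

/-- The claimed mean, in terms of `a = h - 1` and `b = w - 1`. -/
noncomputable def mu (a b : ℝ) : ℝ := a * b / 2 + (a + b + 1)

/-- The claimed variance, in terms of `a = h - 1` and `b = w - 1`. -/
noncomputable def sigmaSq (a b : ℝ) : ℝ := a * b * (a + b + 1) / 12

theorem moments (a b : ℕ) :
    ∑ l ∈ FerrersHW (a + 1) (b + 1), (areaF l : ℝ) =
        (FerrersHW (a + 1) (b + 1)).card * mu a b ∧
      ∑ l ∈ FerrersHW (a + 1) (b + 1), (areaF l : ℝ) ^ 2 =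
        (FerrersHW (a + 1) (b + 1)).card * (sigmaSq a b + mu a b ^ 2) := by
  induction a generalizing b with
  | zero =>
    rw [sum_area_one_row b (fun n => (n : ℝ)), sum_area_one_row b (fun n => (n : ℝ) ^ 2), card_eq]
    simp [mu, sigmaSq]
  | succ a iha =>
    induction b with
    | zero =>
      rw [sum_area_one_column (a + 1) (fun n => (n : ℝ)),
        sum_area_one_column (a + 1) (fun n => (n : ℝ) ^ 2), card_eq]
      simp [mu, sigmaSq]
    | succ b ihb =>
      obtain ⟨p1, p2⟩ := iha (b + 1)
      obtain ⟨q1, q2⟩ := ihb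
      rw [sum_area_rec a b (fun n => (n : ℝ)), sum_area_rec a b (fun n => (n : ℝ) ^ 2)]
      have hne : (a : ℝ) + b + 2 ≠ 0 := by positivity
      have c1 := card_fewer_rows a b
      have c2 := card_fewer_columns a b
      simp only [Nat.cast_add, Nat.cast_one, Nat.cast_ofNat, add_sq, sum_add_distrib, ← sum_mul,
        ← mul_sum, sum_const, nsmul_eq_mul, add_assoc] at p1 p2 q1 q2 c1 c2 ⊢
      rw [p1, p2, q1, q2, c1, c2]
      simp only [mu, sigmaSq]
      constructor
      · field_simp
        ring
      · field_simp
        ring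

/-- For the uniform distribution on Ferrers diagrams with exactly `h` rows and `w`
columns, the expected area is `(h−1)(w−1)/2 + (h+w−1)` and the variance of the area is
`(h−1)(w−1)(h+w−1)/12`. -/
theorem ferrers_fixed_hw_area_mean_variance (h w : ℕ) (hh : 0 < h) (hw : 0 < w) :
    meanAreaHW h w = ((h : ℝ) - 1) * ((w : ℝ) - 1) / 2 + ((h : ℝ) + (w : ℝ) - 1) ∧
    varAreaHW h w = ((h : ℝ) - 1) * ((w : ℝ) - 1) * ((h : ℝ) + (w : ℝ) - 1) / 12 := by
  obtain ⟨a, rfl⟩ := Nat.exists_eq_add_of_lt hh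
  obtain ⟨b, rfl⟩ := Nat.exists_eq_add_of_lt hw
  rw [zero_add, zero_add]
  obtain ⟨m1, m2⟩ := moments a b
  have hc := (card_pos a b).ne'
  have hmean : meanAreaHW (a + 1) (b + 1) = mu a b := by
    rw [meanAreaHW, m1, mul_div_cancel_left₀ _ hc]
  have hvar : varAreaHW (a + 1) (b + 1) = sigmaSq a b := by
    rw [varAreaHW, hmean, div_eq_iff hc]
    simp only [sub_sq, sum_add_distrib, sum_sub_distrib, ← sum_mul, ← mul_sum, sum_const,
      nsmul_eq_mul]
    rw [m1, m2]
    ring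
  rw [hmean, hvar, mu, sigmaSq]
  push_cast
  constructor <;> ring
end
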